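/- arXiv:alg-geom/9612008 — 7 statements merged into one kernel-verified Lean document; each statement's English description precedes it below -/
import Mathlib

section
/- Let a₁, a₂, x ∈ M_{k×k}(ℂ), b ∈ M_{k×n}(ℂ), c ∈ M_{n×k}(ℂ). Then B(p,q)·A(p,q) = 0 for all p = (x₁,x₂,x₃) ∈ ℂ³ and q = (y₁,y₂) ∈ ℂ² satisfying x₁y₁ + x₂y₂ = 0, if and only if the integrability condition a₁xa₂ − a₂xa₁ + bc = 0 holds. -/
open Matrix

/-- The monad map `A(p,q)` of a `ℂP̄²`-configuration `(a₁, a₂, x, b, c)`: the 5×2 block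
matrix with first column `(x₃a₁ ; x₁·1 − x₃xa₁ ; x₃a₂ ; x₂·1 − x₃xa₂ ; x₃c)` and second
column `(−y₂·1 ; 0 ; y₁·1 ; 0 ; 0)`. -/
noncomputable def cpbarA {k n : ℕ} (a₁ a₂ x : Matrix (Fin k) (Fin k) ℂ) (c : Matrix (Fin n) (Fin k) ℂ)
    (p : ℂ × ℂ × ℂ) (q : ℂ × ℂ) :
    Matrix (((Fin k ⊕ Fin k) ⊕ (Fin k ⊕ Fin k)) ⊕ Fin n) (Fin k ⊕ Fin k) ℂ :=
  Matrix.fromCols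
    (Matrix.fromRows
      (Matrix.fromRows
        (Matrix.fromRows (p.2.2 • a₁)
          (p.1 • (1 : Matrix (Fin k) (Fin k) ℂ) - p.2.2 • (x * a₁)))
        (Matrix.fromRows (p.2.2 • a₂)
          (p.2.1 • (1 : Matrix (Fin k) (Fin k) ℂ) - p.2.2 • (x * a₂))))
      (p.2.2 • c))
    (Matrix.fromRows
      (Matrix.fromRows
        (Matrix.fromRows (-(q.2 • (1 : Matrix (Fin k) (Fin k) ℂ))) (0 : Matrix (Fin k) (Fin k) ℂ))
        (Matrix.fromRows (q.1 • (1 : Matrix (Fin k) (Fin k) ℂ)) (0 : Matrix (Fin k) (Fin k) ℂ)))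
      (0 : Matrix (Fin n) (Fin k) ℂ))

/-- The monad map `B(p,q)` of a `ℂP̄²`-configuration `(a₁, a₂, x, b, c)`: the 2×5 block
matrix with first row `(x₂·1 , x₃a₂ , −x₁·1 , −x₃a₁ , x₃b)` and second row
`(y₁x , y₁·1 , y₂x , y₂·1 , 0)`. -/
noncomputable def cpbarB {k n : ℕ} (a₁ a₂ x : Matrix (Fin k) (Fin k) ℂ) (b : Matrix (Fin k) (Fin n) ℂ)
    (p : ℂ × ℂ × ℂ) (q : ℂ × ℂ) :
    Matrix (Fin k ⊕ Fin k) (((Fin k ⊕ Fin k) ⊕ (Fin k ⊕ Fin k)) ⊕ Fin n) ℂ :=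
  Matrix.fromRows
    (Matrix.fromCols
      (Matrix.fromCols
        (Matrix.fromCols (p.2.1 • (1 : Matrix (Fin k) (Fin k) ℂ)) (p.2.2 • a₂))
        (Matrix.fromCols (-(p.1 • (1 : Matrix (Fin k) (Fin k) ℂ))) (-(p.2.2 • a₁))))
      (p.2.2 • b))
    (Matrix.fromCols
      (Matrix.fromCols
        (Matrix.fromCols (q.1 • x) (q.1 • (1 : Matrix (Fin k) (Fin k) ℂ)))
        (Matrix.fromCols (q.2 • x) (q.2 • (1 : Matrix (Fin k) (Fin k) ℂ))))
      (0 : Matrix (Fin k) (Fin n) ℂ))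

/-!
On all of `ℂ³ × ℂ²` the composite `B A` is, in `2 × 2` blocks,
`[[x₃² (a₁ x a₂ - a₂ x a₁ + b c), -(x₁ y₁ + x₂ y₂)], [x₁ y₁ + x₂ y₂, 0]]`.
The incidence relation kills the off-diagonal blocks, so `B A` vanishes at an incident pair with
`x₃` invertible exactly when the integrability condition holds; `p = (0, 0, 1)`, `q = (1, 0)`, a
point of the exceptional divisor, is such a pair.
-/

section FiveBlocks

variable {R l l' m₁ m₂ m₃ m₄ m₅ : Type*}

/-- The block row `(A₁, A₂, A₃, A₄, A₅)`. The columns are bracketed as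
`((m₁ ⊕ m₂) ⊕ (m₃ ⊕ m₄)) ⊕ m₅`, as in the middle term of the monad. -/
def fiveBlockRow (A₁ : Matrix l m₁ R) (A₂ : Matrix l m₂ R) (A₃ : Matrix l m₃ R)
    (A₄ : Matrix l m₄ R) (A₅ : Matrix l m₅ R) :
    Matrix l (((m₁ ⊕ m₂) ⊕ (m₃ ⊕ m₄)) ⊕ m₅) R :=
  fromCols (fromCols (fromCols A₁ A₂) (fromCols A₃ A₄)) A₅

/-- The block column `(A₁ ; A₂ ; A₃ ; A₄ ; A₅)`, with its rows bracketed like the columns of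
`fiveBlockRow` so that the two can be multiplied. -/
def fiveBlockCol (A₁ : Matrix m₁ l R) (A₂ : Matrix m₂ l R) (A₃ : Matrix m₃ l R)
    (A₄ : Matrix m₄ l R) (A₅ : Matrix m₅ l R) :
    Matrix (((m₁ ⊕ m₂) ⊕ (m₃ ⊕ m₄)) ⊕ m₅) l R :=
  fromRows (fromRows (fromRows A₁ A₂) (fromRows A₃ A₄)) A₅

theorem fiveBlockRow_mul_fiveBlockCol [Semiring R]
    [Fintype m₁] [Fintype m₂] [Fintype m₃] [Fintype m₄] [Fintype m₅]
    (A₁ : Matrix l m₁ R) (A₂ : Matrix l m₂ R) (A₃ : Matrix l m₃ R)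
    (A₄ : Matrix l m₄ R) (A₅ : Matrix l m₅ R)
    (B₁ : Matrix m₁ l' R) (B₂ : Matrix m₂ l' R) (B₃ : Matrix m₃ l' R)
    (B₄ : Matrix m₄ l' R) (B₅ : Matrix m₅ l' R) :
    fiveBlockRow A₁ A₂ A₃ A₄ A₅ * fiveBlockCol B₁ B₂ B₃ B₄ B₅ =
      A₁ * B₁ + A₂ * B₂ + (A₃ * B₃ + A₄ * B₄) + A₅ * B₅ := by
  simp only [fiveBlockRow, fiveBlockCol, fromCols_mul_fromRows]

end FiveBlocks

section Monad

variable {R m n : Type*} [DecidableEq m]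

/-- The monad map `A(p,q)` over an arbitrary ring, with `p = (x₁, x₂, x₃)` and `q = (y₁, y₂)`; it
unfolds to `cpbarA` over `ℂ`. -/
def monadA [Ring R] [Fintype m] (a₁ a₂ x : Matrix m m R) (c : Matrix n m R)
    (p : R × R × R) (q : R × R) :
    Matrix (((m ⊕ m) ⊕ (m ⊕ m)) ⊕ n) (m ⊕ m) R :=
  fromCols
    (fiveBlockCol (p.2.2 • a₁) (p.1 • 1 - p.2.2 • (x * a₁))
      (p.2.2 • a₂) (p.2.1 • 1 - p.2.2 • (x * a₂)) (p.2.2 • c))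
    (fiveBlockCol (-(q.2 • 1)) 0 (q.1 • 1) 0 0)

/-- The monad map `B(p,q)` over an arbitrary ring, with `p = (x₁, x₂, x₃)` and `q = (y₁, y₂)`; it
unfolds to `cpbarB` over `ℂ`. -/
def monadB [Ring R] (a₁ a₂ x : Matrix m m R) (b : Matrix m n R)
    (p : R × R × R) (q : R × R) :
    Matrix (m ⊕ m) (((m ⊕ m) ⊕ (m ⊕ m)) ⊕ n) R :=
  fromRows
    (fiveBlockRow (p.2.1 • 1) (p.2.2 • a₂) (-(p.1 • 1)) (-(p.2.2 • a₁)) (p.2.2 • b))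
    (fiveBlockRow (q.1 • x) (q.1 • 1) (q.2 • x) (q.2 • 1) 0)

variable [Fintype m] [Fintype n]

theorem fiveBlockRow_mul_monadA_right {l : Type*} [CommRing R] (A₁ A₂ A₃ A₄ : Matrix l m R)
    (A₅ : Matrix l n R) (y₁ y₂ : R) :
    fiveBlockRow A₁ A₂ A₃ A₄ A₅ *
        fiveBlockCol (-(y₂ • (1 : Matrix m m R))) (0 : Matrix m m R) (y₁ • (1 : Matrix m m R))
          (0 : Matrix m m R) (0 : Matrix n m R) =
      y₁ • A₃ - y₂ • A₁ := by
  simp only [fiveBlockRow_mul_fiveBlockCol, Matrix.mul_neg, Matrix.mul_smul, Matrix.mul_one,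
    Matrix.mul_zero, add_zero]
  module

theorem monadB_lower_mul_fiveBlockCol {l : Type*} [Semiring R] (x : Matrix m m R)
    (B₁ B₂ B₃ B₄ : Matrix m l R) (B₅ : Matrix n l R) (y₁ y₂ : R) :
    fiveBlockRow (y₁ • x) (y₁ • (1 : Matrix m m R)) (y₂ • x) (y₂ • (1 : Matrix m m R))
        (0 : Matrix m n R) * fiveBlockCol B₁ B₂ B₃ B₄ B₅ =
      y₁ • (x * B₁ + B₂) + y₂ • (x * B₃ + B₄) := by
  simp only [fiveBlockRow_mul_fiveBlockCol, Matrix.smul_mul, Matrix.one_mul, Matrix.zero_mul,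
    add_zero, smul_add, add_assoc]

variable [CommRing R] (a₁ a₂ x : Matrix m m R) (b : Matrix m n R) (c : Matrix n m R)

theorem monadB_upper_mul_monadA_left (x₁ x₂ x₃ : R) :
    fiveBlockRow (x₂ • (1 : Matrix m m R)) (x₃ • a₂) (-(x₁ • (1 : Matrix m m R)))
          (-(x₃ • a₁)) (x₃ • b) *
        fiveBlockCol (x₃ • a₁) (x₁ • 1 - x₃ • (x * a₁)) (x₃ • a₂) (x₂ • 1 - x₃ • (x * a₂))
          (x₃ • c) =
      x₃ ^ 2 • (a₁ * x * a₂ - a₂ * x * a₁ + b * c) := by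
  simp only [fiveBlockRow_mul_fiveBlockCol, Matrix.mul_sub, Matrix.neg_mul, Matrix.smul_mul,
    Matrix.mul_smul, Matrix.one_mul, Matrix.mul_one, Matrix.mul_assoc]
  module

theorem monadB_mul_monadA (p : R × R × R) (q : R × R) :
    monadB a₁ a₂ x b p q * monadA a₁ a₂ x c p q =
      fromBlocks (p.2.2 ^ 2 • (a₁ * x * a₂ - a₂ * x * a₁ + b * c))
        (-((p.1 * q.1 + p.2.1 * q.2) • 1)) ((p.1 * q.1 + p.2.1 * q.2) • 1) 0 := by
  obtain ⟨x₁, x₂, x₃⟩ := p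
  obtain ⟨y₁, y₂⟩ := q
  have upper_right :
      y₁ • -(x₁ • (1 : Matrix m m R)) - y₂ • (x₂ • 1) = -((x₁ * y₁ + x₂ * y₂) • 1) := by
    module
  have lower_left :
      y₁ • (x * (x₃ • a₁) + (x₁ • 1 - x₃ • (x * a₁))) +
          y₂ • (x * (x₃ • a₂) + (x₂ • 1 - x₃ • (x * a₂))) =
        (x₁ * y₁ + x₂ * y₂) • 1 := by
    simp only [Matrix.mul_smul, add_sub_cancel]
    module
  have lower_right : y₁ • (y₂ • x) - y₂ • (y₁ • x) = 0 := by
    rw [smul_comm, sub_self]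
  simp only [monadB, monadA, fromRows_mul_fromCols, monadB_upper_mul_monadA_left,
    fiveBlockRow_mul_monadA_right, monadB_lower_mul_fiveBlockCol, upper_right, lower_left,
    lower_right]

theorem monadB_mul_monadA_eq_zero_iff {p : R × R × R} {q : R × R}
    (hpq : p.1 * q.1 + p.2.1 * q.2 = 0) :
    monadB a₁ a₂ x b p q * monadA a₁ a₂ x c p q = 0 ↔
      p.2.2 ^ 2 • (a₁ * x * a₂ - a₂ * x * a₁ + b * c) = 0 := by
  rw [monadB_mul_monadA, hpq, ← fromBlocks_zero, fromBlocks_inj]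
  simp

theorem cpbar_monad_integrability_general :
    (∀ (p : R × R × R) (q : R × R), p.1 * q.1 + p.2.1 * q.2 = 0 →
      monadB a₁ a₂ x b p q * monadA a₁ a₂ x c p q = 0) ↔
    a₁ * x * a₂ - a₂ * x * a₁ + b * c = 0 := by
  constructor
  · intro h
    have incident : (0 : R) * 1 + 0 * 0 = 0 := by simp
    have h₀ := h (0, 0, 1) (1, 0) incident
    simpa only [one_pow, one_smul] using
      (monadB_mul_monadA_eq_zero_iff a₁ a₂ x b c incident).mp h₀
  · intro h p q hpq
    rw [monadB_mul_monadA_eq_zero_iff a₁ a₂ x b c hpq, h, smul_zero]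

end Monad

/-- `B(p,q)·A(p,q) = 0` for all `p = (x₁,x₂,x₃) ∈ ℂ³` and `q = (y₁,y₂) ∈ ℂ²` with
`x₁y₁ + x₂y₂ = 0` iff the integrability condition `a₁xa₂ − a₂xa₁ + bc = 0` holds. -/
theorem cpbar_monad_integrability {k n : ℕ}
    (a₁ a₂ x : Matrix (Fin k) (Fin k) ℂ)
    (b : Matrix (Fin k) (Fin n) ℂ) (c : Matrix (Fin n) (Fin k) ℂ) :
    (∀ (p : ℂ × ℂ × ℂ) (q : ℂ × ℂ), p.1 * q.1 + p.2.1 * q.2 = 0 →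
      cpbarB a₁ a₂ x b p q * cpbarA a₁ a₂ x c p q = 0) ↔
    a₁ * x * a₂ - a₂ * x * a₁ + b * c = 0 :=
  cpbar_monad_integrability_general a₁ a₂ x b c
end

section
/- Let Φ ∈ M_{k×k}(ℂ) be symmetric (Φᵀ = Φ) and invertible, let α₁, α₂ ∈ M_{k×k}(ℂ) satisfy (Φαᵢ)ᵀ = Φαᵢ, and let γ ∈ M_{n×k}(ℂ) where n is even with standard symplectic matrix J. For every (x₁,x₂,x₃) ∈ ℂ³ one has the matrix identity A(x)ᵀ·βᵀ·A(x) = −x₃²·(Φ(α₁α₂ − α₂α₁) + γᵀJγ). Consequently A(x)ᵀβᵀA(x) = 0 for all (x₁,x₂,x₃) ∈ ℂ³ (the anti-self-dual monad condition for the Sp(n/2) instanton construction on S⁴) if and only if Φ(α₁α₂ − α₂α₁) + γᵀJγ = 0. -/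
open Matrix

/-- The standard symplectic matrix `J = [[0, −I_m],[I_m, 0]]` on `ℂⁿ = ℂᵐ ⊕ ℂᵐ`. -/
noncomputable def stdSymplectic (m : ℕ) : Matrix (Fin m ⊕ Fin m) (Fin m ⊕ Fin m) ℂ :=
  Matrix.fromBlocks 0 (-1) 1 0

/-- The monad map `A(x)` for an `Sp`-type `S⁴`-configuration `(α₁, α₂, γ)`:
the block column matrix `(x₁·1 − x₃α₁ ; x₂·1 − x₃α₂ ; x₃γ)`. -/
noncomputable def spA {k m : ℕ} (α₁ α₂ : Matrix (Fin k) (Fin k) ℂ)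
    (γ : Matrix (Fin m ⊕ Fin m) (Fin k) ℂ) (x : ℂ × ℂ × ℂ) :
    Matrix ((Fin k ⊕ Fin k) ⊕ (Fin m ⊕ Fin m)) (Fin k) ℂ :=
  Matrix.fromRows
    (Matrix.fromRows (x.1 • (1 : Matrix (Fin k) (Fin k) ℂ) - x.2.2 • α₁)
      (x.2.1 • (1 : Matrix (Fin k) (Fin k) ℂ) - x.2.2 • α₂))
    (x.2.2 • γ)

/-- The matrix `β = [[0, Φ, 0],[−Φ, 0, 0],[0, 0, J]]`. -/
noncomputable def spBeta {k m : ℕ} (Φ : Matrix (Fin k) (Fin k) ℂ) :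
    Matrix ((Fin k ⊕ Fin k) ⊕ (Fin m ⊕ Fin m)) ((Fin k ⊕ Fin k) ⊕ (Fin m ⊕ Fin m)) ℂ :=
  Matrix.fromBlocks (Matrix.fromBlocks 0 Φ (-Φ) 0) 0 0 (stdSymplectic m)

/-!
Only the skew pairing of the first two blocks `P = x₁·1 − x₃α₁`, `Q = x₂·1 − x₃α₂` of `A(x)` and
the `J`-term of the last block contribute to `A(x)ᵀβA(x)`, giving `PᵀΦQ − QᵀΦP + x₃²·γᵀJγ`.
Symmetry of `Φ` and `Φαᵢ` makes `αᵢ`, hence `P` and `Q`, self-adjoint for `Φ`, so the pairing is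
`Φ⁅P, Q⁆`; scalar matrices are central, so `⁅P, Q⁆ = x₃²·⁅α₁, α₂⁆`. Finally `βᵀ = −β`, and the
resulting identity at `x = (0, 0, 1)` recovers the integrability equation.
-/

theorem lie_smul_one_sub_smul {R A : Type*} [CommRing R] [Ring A] [Algebra R A]
    (s s' t t' : R) (a b : A) :
    ⁅s • (1 : A) - t • a, s' • (1 : A) - t' • b⁆ = (t * t') • ⁅a, b⁆ := by
  simp only [Ring.lie_def, sub_mul, mul_sub, smul_mul_assoc, mul_smul_comm, one_mul, mul_one]
  module

section SelfAdjoint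

variable {R ι : Type*} [CommRing R] [Fintype ι] {Φ P Q : Matrix ι ι R}

theorem isSymm_mul_iff_isSelfAdjoint (hΦ : Φ.IsSymm) : (Φ * P).IsSymm ↔ Φ.IsSelfAdjoint P := by
  rw [Matrix.IsSymm, transpose_mul, hΦ.eq, Matrix.IsSelfAdjoint, Matrix.IsAdjointPair]

theorem isSelfAdjoint_smul_one_sub_smul [DecidableEq ι] (hP : Φ.IsSelfAdjoint P) (s t : R) :
    Φ.IsSelfAdjoint (s • 1 - t • P) := by
  have h_one : Φ.IsSelfAdjoint 1 := by simp [Matrix.IsSelfAdjoint, Matrix.IsAdjointPair]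
  rw [← mem_selfAdjointMatricesSubmodule] at hP h_one ⊢
  exact sub_mem (Submodule.smul_mem _ s h_one) (Submodule.smul_mem _ t hP)

theorem transpose_mul_mul_sub_of_isSelfAdjoint
    (hP : Φ.IsSelfAdjoint P) (hQ : Φ.IsSelfAdjoint Q) :
    Pᵀ * Φ * Q - Qᵀ * Φ * P = Φ * (P * Q - Q * P) := by
  rw [hP, hQ, Matrix.mul_sub, Matrix.mul_assoc, Matrix.mul_assoc]

end SelfAdjoint

section S4Monad

variable {R ι κ : Type*} [CommRing R]

/-- The monad map `A(x)` of an `S⁴`-configuration over any commutative ring and any index types: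
`x.1`, `x.2.1`, `x.2.2` are the coordinates `x₁`, `x₂`, `x₃`. -/
def s4MonadMap [DecidableEq ι] (α₁ α₂ : Matrix ι ι R) (γ : Matrix κ ι R) (x : R × R × R) :
    Matrix ((ι ⊕ ι) ⊕ κ) ι R :=
  fromRows (fromRows (x.1 • 1 - x.2.2 • α₁) (x.2.1 • 1 - x.2.2 • α₂)) (x.2.2 • γ)

/-- The form `β = [[0, Φ, 0],[−Φ, 0, 0],[0, 0, J]]` pairing the values of the monad map, with an
arbitrary matrix `J` in place of the standard symplectic one. -/
def s4MonadForm (Φ : Matrix ι ι R) (J : Matrix κ κ R) :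
    Matrix ((ι ⊕ ι) ⊕ κ) ((ι ⊕ ι) ⊕ κ) R :=
  fromBlocks (fromBlocks 0 Φ (-Φ) 0) 0 0 J

theorem s4MonadForm_transpose {Φ : Matrix ι ι R} {J : Matrix κ κ R} (hΦ : Φ.IsSymm)
    (hJ : Jᵀ = -J) : (s4MonadForm Φ J)ᵀ = -s4MonadForm Φ J := by
  simp only [s4MonadForm, fromBlocks_transpose, fromBlocks_neg, transpose_neg, transpose_zero,
    neg_zero, neg_neg, hΦ.eq, hJ]

variable [Fintype ι] [Fintype κ]

theorem transpose_fromRows_mul_s4MonadForm_mul_fromRows {ν : Type*} (Φ : Matrix ι ι R)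
    (J : Matrix κ κ R) (P Q : Matrix ι ν R) (C : Matrix κ ν R) :
    (fromRows (fromRows P Q) C)ᵀ * s4MonadForm Φ J * fromRows (fromRows P Q) C =
      Pᵀ * Φ * Q - Qᵀ * Φ * P + Cᵀ * J * C := by
  simp only [s4MonadForm, transpose_fromRows, fromCols_mul_fromBlocks, fromCols_mul_fromRows,
    Matrix.mul_zero, Matrix.mul_neg, Matrix.neg_mul, zero_add, add_zero]
  abel

variable [DecidableEq ι]

theorem transpose_s4MonadMap_mul_s4MonadForm_mul_s4MonadMap {Φ α₁ α₂ : Matrix ι ι R}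
    (h₁ : Φ.IsSelfAdjoint α₁) (h₂ : Φ.IsSelfAdjoint α₂) (J : Matrix κ κ R) (γ : Matrix κ ι R)
    (x : R × R × R) :
    (s4MonadMap α₁ α₂ γ x)ᵀ * s4MonadForm Φ J * s4MonadMap α₁ α₂ γ x =
      x.2.2 ^ 2 • (Φ * (α₁ * α₂ - α₂ * α₁) + γᵀ * J * γ) := by
  obtain ⟨x₁, x₂, x₃⟩ := x
  calc
    _ = Φ * ⁅x₁ • 1 - x₃ • α₁, x₂ • 1 - x₃ • α₂⁆ + (x₃ • γ)ᵀ * J * (x₃ • γ) := by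
      rw [s4MonadMap, transpose_fromRows_mul_s4MonadForm_mul_fromRows,
        transpose_mul_mul_sub_of_isSelfAdjoint (isSelfAdjoint_smul_one_sub_smul h₁ x₁ x₃)
          (isSelfAdjoint_smul_one_sub_smul h₂ x₂ x₃), Ring.lie_def]
    _ = x₃ ^ 2 • (Φ * ⁅α₁, α₂⁆ + γᵀ * J * γ) := by
      simp only [lie_smul_one_sub_smul, transpose_smul, Matrix.smul_mul, Matrix.mul_smul,
        smul_smul, smul_add, sq]

theorem sp_s4_monad_integrability_general {Φ α₁ α₂ : Matrix ι ι R} {J : Matrix κ κ R}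
    (hΦ : Φ.IsSymm) (hJ : Jᵀ = -J) (h₁ : (Φ * α₁).IsSymm) (h₂ : (Φ * α₂).IsSymm)
    (γ : Matrix κ ι R) :
    (∀ x : R × R × R,
      (s4MonadMap α₁ α₂ γ x)ᵀ * (s4MonadForm Φ J)ᵀ * s4MonadMap α₁ α₂ γ x =
        -(x.2.2 ^ 2) • (Φ * (α₁ * α₂ - α₂ * α₁) + γᵀ * J * γ)) ∧
    ((∀ x : R × R × R,
      (s4MonadMap α₁ α₂ γ x)ᵀ * (s4MonadForm Φ J)ᵀ * s4MonadMap α₁ α₂ γ x = 0) ↔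
      Φ * (α₁ * α₂ - α₂ * α₁) + γᵀ * J * γ = 0) := by
  have pullback_eq (x : R × R × R) :
      (s4MonadMap α₁ α₂ γ x)ᵀ * (s4MonadForm Φ J)ᵀ * s4MonadMap α₁ α₂ γ x =
        -(x.2.2 ^ 2) • (Φ * (α₁ * α₂ - α₂ * α₁) + γᵀ * J * γ) := by
    rw [s4MonadForm_transpose hΦ hJ, Matrix.mul_neg, Matrix.neg_mul,
      transpose_s4MonadMap_mul_s4MonadForm_mul_s4MonadMap
        ((isSymm_mul_iff_isSelfAdjoint hΦ).1 h₁) ((isSymm_mul_iff_isSelfAdjoint hΦ).1 h₂), neg_smul]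
  refine ⟨pullback_eq, fun h => ?_, fun h x => by rw [pullback_eq, h, smul_zero]⟩
  simpa only [pullback_eq, one_pow, neg_smul, one_smul, neg_eq_zero] using h (0, 0, 1)

end S4Monad

/-- For a symmetric invertible `Φ`, `Φαᵢ` symmetric and `γ ∈ M_{n×k}(ℂ)` (`n = 2m`):
`A(x)ᵀβᵀA(x) = −x₃²·(Φ(α₁α₂ − α₂α₁) + γᵀJγ)` for all `x ∈ ℂ³`, and consequently the
anti-self-dual monad condition `A(x)ᵀβᵀA(x) = 0` for all `x` holds iff
`Φ(α₁α₂ − α₂α₁) + γᵀJγ = 0`. -/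
theorem sp_s4_monad_integrability {k m : ℕ}
    (Φ : Matrix (Fin k) (Fin k) ℂ) (hΦsymm : Φᵀ = Φ) (hΦinv : IsUnit Φ)
    (α₁ α₂ : Matrix (Fin k) (Fin k) ℂ)
    (h₁ : (Φ * α₁)ᵀ = Φ * α₁) (h₂ : (Φ * α₂)ᵀ = Φ * α₂)
    (γ : Matrix (Fin m ⊕ Fin m) (Fin k) ℂ) :
    (∀ x : ℂ × ℂ × ℂ,
      (spA α₁ α₂ γ x)ᵀ * (spBeta (m := m) Φ)ᵀ * spA α₁ α₂ γ x =
        -(x.2.2 ^ 2) • (Φ * (α₁ * α₂ - α₂ * α₁) + γᵀ * stdSymplectic m * γ)) ∧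
    ((∀ x : ℂ × ℂ × ℂ,
      (spA α₁ α₂ γ x)ᵀ * (spBeta (m := m) Φ)ᵀ * spA α₁ α₂ γ x = 0) ↔
      Φ * (α₁ * α₂ - α₂ * α₁) + γᵀ * stdSymplectic m * γ = 0) :=
  sp_s4_monad_integrability_general hΦsymm (J_transpose (Fin m) ℂ) h₁ h₂ γ
end

section
/- Let Φ ∈ M_{k×k}(ℂ) be antisymmetric (Φᵀ = −Φ) and invertible (so k is even), let α₁, α₂ ∈ M_{k×k}(ℂ) satisfy (Φαᵢ)ᵀ = −Φαᵢ, and let γ ∈ M_{n×k}(ℂ). For every (x₁,x₂,x₃) ∈ ℂ³ one has the matrix identity A(x)ᵀ·βᵀ·A(x) = x₃²·(Φ(α₁α₂ − α₂α₁) + γᵀγ). Consequently A(x)ᵀβᵀA(x) = 0 for all (x₁,x₂,x₃) ∈ ℂ³ (the self-dual monad condition for the SO(n) instanton construction on S⁴) if and only if the integrability condition Φ(α₁α₂ − α₂α₁) + γᵀγ = 0 holds. -/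
open Matrix

/-- The monad map `A(x)` for an `SO`-type `S⁴`-configuration `(α₁, α₂, γ)`:
the block column matrix `(x₁·1 − x₃α₁ ; x₂·1 − x₃α₂ ; x₃γ)`. -/
noncomputable def soA {k n : ℕ} (α₁ α₂ : Matrix (Fin k) (Fin k) ℂ)
    (γ : Matrix (Fin n) (Fin k) ℂ) (x : ℂ × ℂ × ℂ) :
    Matrix ((Fin k ⊕ Fin k) ⊕ Fin n) (Fin k) ℂ :=
  Matrix.fromRows
    (Matrix.fromRows (x.1 • (1 : Matrix (Fin k) (Fin k) ℂ) - x.2.2 • α₁)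
      (x.2.1 • (1 : Matrix (Fin k) (Fin k) ℂ) - x.2.2 • α₂))
    (x.2.2 • γ)

/-- The matrix `β = [[0, Φ, 0],[−Φ, 0, 0],[0, 0, I_n]]`. -/
noncomputable def soBeta {k n : ℕ} (Φ : Matrix (Fin k) (Fin k) ℂ) :
    Matrix ((Fin k ⊕ Fin k) ⊕ Fin n) ((Fin k ⊕ Fin k) ⊕ Fin n) ℂ :=
  Matrix.fromBlocks (Matrix.fromBlocks 0 Φ (-Φ) 0) 0 0 1

/-! With respect to an antisymmetric form `Φ`, antisymmetry of `Φ * αᵢ` says that `αᵢ` is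
self-adjoint, and hence so is `xᵢ • 1 - x₃ • αᵢ`. The symplectic block of `β` therefore contributes
`Φ` times the commutator of these two matrices to `A(x)ᵀ * βᵀ * A(x)`; the scalar parts commute
with everything, so the commutator is `x₃² • ⁅α₁, α₂⁆`. -/

theorem smul_one_sub_smul_lie {R A : Type*} [CommRing R] [Ring A] [Algebra R A]
    (a b c d : R) (x y : A) :
    ⁅a • (1 : A) - c • x, b • (1 : A) - d • y⁆ = (c * d) • ⁅x, y⁆ := by
  simp only [Ring.lie_def, sub_mul, mul_sub, smul_mul_smul_comm, one_mul, mul_one]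
  module

section Adjoint

variable {R m : Type*} [CommRing R] [Fintype m] {J A B : Matrix m m R}

theorem isSelfAdjoint_iff_transpose_mul_eq_neg (hJ : Jᵀ = -J) :
    J.IsSelfAdjoint A ↔ (J * A)ᵀ = -(J * A) := by
  rw [Matrix.IsSelfAdjoint, Matrix.IsAdjointPair, transpose_mul, hJ, Matrix.mul_neg, neg_inj]

theorem isSelfAdjoint_smul_one_sub_smul_s3 [DecidableEq m] (hA : J.IsSelfAdjoint A) (a c : R) :
    J.IsSelfAdjoint (a • (1 : Matrix m m R) - c • A) := by
  have h_one : J.IsSelfAdjoint 1 := by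
    rw [Matrix.IsSelfAdjoint, Matrix.IsAdjointPair, transpose_one, Matrix.one_mul, Matrix.mul_one]
  rw [← mem_selfAdjointMatricesSubmodule] at h_one hA ⊢
  exact sub_mem (Submodule.smul_mem _ a h_one) (Submodule.smul_mem _ c hA)

theorem transpose_mul_mul_sub_eq_mul_lie (hA : J.IsSelfAdjoint A) (hB : J.IsSelfAdjoint B) :
    Aᵀ * J * B - Bᵀ * J * A = J * ⁅A, B⁆ := by
  rw [show Aᵀ * J = J * A from hA, show Bᵀ * J = J * B from hB, Ring.lie_def, Matrix.mul_sub,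
    Matrix.mul_assoc, Matrix.mul_assoc]

end Adjoint

section Monad

variable {R m n : Type*} [CommRing R] [Fintype m] [Fintype n] [DecidableEq n]

/-- The matrix `β` over a commutative ring and for arbitrary index types, generalizing `soBeta`.
The index type `n` of the identity block is explicit since `Φ` does not determine it. -/
def soMonadForm (n : Type*) [DecidableEq n] (Φ : Matrix m m R) :
    Matrix ((m ⊕ m) ⊕ n) ((m ⊕ m) ⊕ n) R :=
  fromBlocks (fromBlocks 0 Φ (-Φ) 0) 0 0 1

theorem transpose_fromRows_mul_soMonadForm_mul_fromRows {l : Type*} {Φ : Matrix m m R}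
    (hΦ : Φᵀ = -Φ) (P Q : Matrix m l R) (G : Matrix n l R) :
    (fromRows (fromRows P Q) G)ᵀ * (soMonadForm n Φ)ᵀ * fromRows (fromRows P Q) G =
      Pᵀ * Φ * Q - Qᵀ * Φ * P + Gᵀ * G := by
  simp only [soMonadForm, transpose_fromRows, fromBlocks_transpose, transpose_zero, transpose_one,
    transpose_neg, hΦ, neg_neg, fromCols_mul_fromBlocks, fromCols_mul_fromRows, Matrix.mul_zero,
    Matrix.mul_one, Matrix.mul_neg, Matrix.neg_mul, zero_add, add_zero]
  abel

variable [DecidableEq m]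

/-- The monad map `A(x)` over a commutative ring and for arbitrary index types; `soA` is the case
`R = ℂ`, `m = Fin k`, `n = Fin n`. -/
def soMonadMap (α₁ α₂ : Matrix m m R) (γ : Matrix n m R) (x : R × R × R) :
    Matrix ((m ⊕ m) ⊕ n) m R :=
  fromRows (fromRows (x.1 • 1 - x.2.2 • α₁) (x.2.1 • 1 - x.2.2 • α₂)) (x.2.2 • γ)

theorem transpose_soMonadMap_mul_soMonadForm_mul_soMonadMap {Φ α₁ α₂ : Matrix m m R} (hΦ : Φᵀ = -Φ)
    (h₁ : Φ.IsSelfAdjoint α₁) (h₂ : Φ.IsSelfAdjoint α₂) (γ : Matrix n m R) (x : R × R × R) :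
    (soMonadMap α₁ α₂ γ x)ᵀ * (soMonadForm n Φ)ᵀ * soMonadMap α₁ α₂ γ x =
      x.2.2 ^ 2 • (Φ * ⁅α₁, α₂⁆ + γᵀ * γ) := by
  rw [soMonadMap, transpose_fromRows_mul_soMonadForm_mul_fromRows hΦ,
    transpose_mul_mul_sub_eq_mul_lie (isSelfAdjoint_smul_one_sub_smul_s3 h₁ _ _)
      (isSelfAdjoint_smul_one_sub_smul_s3 h₂ _ _),
    smul_one_sub_smul_lie, transpose_smul, Matrix.smul_mul, Matrix.mul_smul, Matrix.mul_smul,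
    smul_smul, ← smul_add, sq]

theorem so_s4_monad_integrability_general (Φ : Matrix m m R) (hΦ : Φᵀ = -Φ)
    (α₁ α₂ : Matrix m m R) (h₁ : (Φ * α₁)ᵀ = -(Φ * α₁)) (h₂ : (Φ * α₂)ᵀ = -(Φ * α₂))
    (γ : Matrix n m R) :
    (∀ x : R × R × R,
      (soMonadMap α₁ α₂ γ x)ᵀ * (soMonadForm n Φ)ᵀ * soMonadMap α₁ α₂ γ x =
        x.2.2 ^ 2 • (Φ * (α₁ * α₂ - α₂ * α₁) + γᵀ * γ)) ∧
    ((∀ x : R × R × R,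
      (soMonadMap α₁ α₂ γ x)ᵀ * (soMonadForm n Φ)ᵀ * soMonadMap α₁ α₂ γ x = 0) ↔
      Φ * (α₁ * α₂ - α₂ * α₁) + γᵀ * γ = 0) := by
  have identity := transpose_soMonadMap_mul_soMonadForm_mul_soMonadMap hΦ
    ((isSelfAdjoint_iff_transpose_mul_eq_neg hΦ).2 h₁)
    ((isSelfAdjoint_iff_transpose_mul_eq_neg hΦ).2 h₂) γ
  rw [Ring.lie_def] at identity
  refine ⟨identity, fun vanishing ↦ ?_, fun integrable x ↦ by rw [identity, integrable, smul_zero]⟩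
  simpa only [one_pow, one_smul] using (identity (0, 0, 1)).symm.trans (vanishing (0, 0, 1))

end Monad

/-- For an antisymmetric invertible `Φ`, `Φαᵢ` antisymmetric and `γ ∈ M_{n×k}(ℂ)`:
`A(x)ᵀβᵀA(x) = x₃²·(Φ(α₁α₂ − α₂α₁) + γᵀγ)` for all `x ∈ ℂ³`, and consequently the
self-dual monad condition `A(x)ᵀβᵀA(x) = 0` for all `x` holds iff the integrability
condition `Φ(α₁α₂ − α₂α₁) + γᵀγ = 0` holds. -/
theorem so_s4_monad_integrability {k n : ℕ}
    (Φ : Matrix (Fin k) (Fin k) ℂ) (hΦanti : Φᵀ = -Φ) (hΦinv : IsUnit Φ)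
    (α₁ α₂ : Matrix (Fin k) (Fin k) ℂ)
    (h₁ : (Φ * α₁)ᵀ = -(Φ * α₁)) (h₂ : (Φ * α₂)ᵀ = -(Φ * α₂))
    (γ : Matrix (Fin n) (Fin k) ℂ) :
    (∀ x : ℂ × ℂ × ℂ,
      (soA α₁ α₂ γ x)ᵀ * (soBeta (n := n) Φ)ᵀ * soA α₁ α₂ γ x =
        x.2.2 ^ 2 • (Φ * (α₁ * α₂ - α₂ * α₁) + γᵀ * γ)) ∧
    ((∀ x : ℂ × ℂ × ℂ,
      (soA α₁ α₂ γ x)ᵀ * (soBeta (n := n) Φ)ᵀ * soA α₁ α₂ γ x = 0) ↔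
      Φ * (α₁ * α₂ - α₂ * α₁) + γᵀ * γ = 0) :=
  so_s4_monad_integrability_general Φ hΦanti α₁ α₂ h₁ h₂ γ
end

section
/- Let α₁, α₂, ξ ∈ M_{k×k}(ℂ) be symmetric matrices (αᵢᵀ = αᵢ, ξᵀ = ξ) and γ ∈ M_{n×k}(ℂ) where n is even with standard symplectic matrix J. Then A(p,q)ᵀ·βᵀ·A(p,q) = 0 for all p = (x₁,x₂,x₃) ∈ ℂ³ and q = (y₁,y₂) ∈ ℂ² with x₁y₁ + x₂y₂ = 0 (the anti-self-dual monad condition for the Sp(n/2) instanton construction on ℂP̄²), if and only if the integrability condition α₁ξα₂ − α₂ξα₁ − γᵀJγ = 0 holds. -/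
open Matrix

/-- The monad map `A(p,q)` for an `Sp`-type `ℂP̄²`-configuration `(α₁, α₂, ξ, γ)`:
the 5×2 block matrix with first column `(x₃α₁ ; x₁·1 − x₃ξα₁ ; x₃α₂ ; x₂·1 − x₃ξα₂ ; x₃γ)`
and second column `(−y₂·1 ; 0 ; y₁·1 ; 0 ; 0)`. -/
noncomputable def spCpA {k m : ℕ} (α₁ α₂ ξ : Matrix (Fin k) (Fin k) ℂ)
    (γ : Matrix (Fin m ⊕ Fin m) (Fin k) ℂ) (p : ℂ × ℂ × ℂ) (q : ℂ × ℂ) :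
    Matrix (((Fin k ⊕ Fin k) ⊕ (Fin k ⊕ Fin k)) ⊕ (Fin m ⊕ Fin m)) (Fin k ⊕ Fin k) ℂ :=
  Matrix.fromCols
    (Matrix.fromRows
      (Matrix.fromRows
        (Matrix.fromRows (p.2.2 • α₁)
          (p.1 • (1 : Matrix (Fin k) (Fin k) ℂ) - p.2.2 • (ξ * α₁)))
        (Matrix.fromRows (p.2.2 • α₂)
          (p.2.1 • (1 : Matrix (Fin k) (Fin k) ℂ) - p.2.2 • (ξ * α₂))))
      (p.2.2 • γ))
    (Matrix.fromRows
      (Matrix.fromRows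
        (Matrix.fromRows (-(q.2 • (1 : Matrix (Fin k) (Fin k) ℂ))) (0 : Matrix (Fin k) (Fin k) ℂ))
        (Matrix.fromRows (q.1 • (1 : Matrix (Fin k) (Fin k) ℂ)) (0 : Matrix (Fin k) (Fin k) ℂ)))
      (0 : Matrix (Fin m ⊕ Fin m) (Fin k) ℂ))

/-- The matrix `β` with `k×k` (and `n×n`) blocks
`[[0,0,ξ,1,0],[0,0,1,0,0],[−ξ,−1,0,0,0],[−1,0,0,0,0],[0,0,0,0,J]]`. -/
noncomputable def spCpBeta {k m : ℕ} (ξ : Matrix (Fin k) (Fin k) ℂ) :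
    Matrix (((Fin k ⊕ Fin k) ⊕ (Fin k ⊕ Fin k)) ⊕ (Fin m ⊕ Fin m))
      (((Fin k ⊕ Fin k) ⊕ (Fin k ⊕ Fin k)) ⊕ (Fin m ⊕ Fin m)) ℂ :=
  Matrix.fromBlocks
    (Matrix.fromBlocks 0 (Matrix.fromBlocks ξ 1 1 0) (Matrix.fromBlocks (-ξ) (-1) (-1) 0) 0)
    0 0 (stdSymplectic m)

/-!
The product `Aᵀ βᵀ A` has four blocks, obtained by pairing the two columns of `A` through `βᵀ`.
The column depending on `q` is isotropic, and the mixed blocks are multiples of `x₁y₁ + x₂y₂` up to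
terms in `ξᵀ - ξ`. The column depending on `p` pairs with itself to `x₃²` times the integrability
expression plus `x₃` times a combination of the `αᵢᵀ - αᵢ`. Hence symmetric data satisfying the
integrability condition solve the monad equation, and conversely evaluating it at
`p = (ε₁, ε₂, 1)` and at a coordinate vector or zero for `q` isolates each obstruction. This
argument never divides, so it applies over every commutative ring.
-/

section Pairing

variable {R ι κ μ ν : Type*}

/-- The block column `(a ; a' ; b ; b' ; c)`, with its rows grouped as the two halves
`(a ; a')`, `(b ; b')` that `β` pairs with each other, followed by the summand `c` that it pairs
with itself. -/
def cpBarColumn (a a' b b' : Matrix ι μ R) (c : Matrix κ μ R) :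
    Matrix (((ι ⊕ ι) ⊕ (ι ⊕ ι)) ⊕ κ) μ R :=
  fromRows (fromRows (fromRows a a') (fromRows b b')) c

lemma cpBarColumn_transpose_mul [Semiring R] [Fintype ι] [Fintype κ]
    (a a' b b' : Matrix ι μ R) (c : Matrix κ μ R) (d d' e e' : Matrix ι ν R) (f : Matrix κ ν R) :
    (cpBarColumn a a' b b' c)ᵀ * cpBarColumn d d' e e' f =
      aᵀ * d + a'ᵀ * d' + (bᵀ * e + b'ᵀ * e') + cᵀ * f := by
  simp only [cpBarColumn, transpose_fromRows, fromCols_mul_fromRows]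

variable [Ring R] [DecidableEq ι]

/-- The matrix `β` over a ring, with an arbitrary square block `J` in place of the standard
symplectic matrix. -/
def cpBarForm (ξ : Matrix ι ι R) (J : Matrix κ κ R) :
    Matrix (((ι ⊕ ι) ⊕ (ι ⊕ ι)) ⊕ κ) (((ι ⊕ ι) ⊕ (ι ⊕ ι)) ⊕ κ) R :=
  fromBlocks (fromBlocks 0 (fromBlocks ξ 1 1 0) (fromBlocks (-ξ) (-1) (-1) 0) 0) 0 0 J

lemma cpBarForm_transpose (ξ : Matrix ι ι R) (J : Matrix κ κ R) :
    (cpBarForm ξ J)ᵀ = -cpBarForm ξᵀ (-Jᵀ) := by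
  simp [cpBarForm, fromBlocks_transpose, fromBlocks_neg]

variable [Fintype ι] [Fintype κ]

lemma cpBarForm_mul_cpBarColumn (ξ : Matrix ι ι R) (J : Matrix κ κ R)
    (a a' b b' : Matrix ι μ R) (c : Matrix κ μ R) :
    cpBarForm ξ J * cpBarColumn a a' b b' c =
      cpBarColumn (ξ * b + b') b (-(ξ * a) - a') (-a) (J * c) := by
  simp [cpBarForm, cpBarColumn, fromBlocks_mul_fromRows, sub_eq_add_neg]

lemma cpBarColumn_pairing (ξ : Matrix ι ι R) (J : Matrix κ κ R)
    (a a' b b' : Matrix ι μ R) (c : Matrix κ μ R)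
    (d d' e e' : Matrix ι ν R) (f : Matrix κ ν R) :
    (cpBarColumn a a' b b' c)ᵀ * (cpBarForm ξ J)ᵀ * cpBarColumn d d' e e' f =
      bᵀ * (ξᵀ * d + d') + b'ᵀ * d - aᵀ * (ξᵀ * e + e') - a'ᵀ * e + cᵀ * (Jᵀ * f) := by
  rw [cpBarForm_transpose, Matrix.mul_assoc, Matrix.neg_mul, cpBarForm_mul_cpBarColumn,
    Matrix.mul_neg, cpBarColumn_transpose_mul]
  simp only [Matrix.mul_add, Matrix.mul_sub, Matrix.mul_neg, Matrix.neg_mul]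
  abel

end Pairing

section MonadMap

variable {R ι κ : Type*} [CommRing R] [DecidableEq ι]

/-- The first column of the monad map `A(p,q)`, a function of `p = (x₁, x₂, x₃)`. -/
def cpBarMonadColumnP [Fintype ι] (α₁ α₂ ξ : Matrix ι ι R) (γ : Matrix κ ι R) (x₁ x₂ x₃ : R) :
    Matrix (((ι ⊕ ι) ⊕ (ι ⊕ ι)) ⊕ κ) ι R :=
  cpBarColumn (x₃ • α₁) (x₁ • 1 - x₃ • (ξ * α₁)) (x₃ • α₂) (x₂ • 1 - x₃ • (ξ * α₂)) (x₃ • γ)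

variable (ι κ) in
/-- The second column of the monad map `A(p,q)`, a function of `q = (y₁, y₂)`. -/
def cpBarMonadColumnQ (y₁ y₂ : R) : Matrix (((ι ⊕ ι) ⊕ (ι ⊕ ι)) ⊕ κ) ι R :=
  cpBarColumn (-(y₂ • 1)) 0 (y₁ • 1) 0 0

/-- The monad map `A(p,q)` over a commutative ring, with arbitrary index types. -/
def cpBarMonadMap [Fintype ι] (α₁ α₂ ξ : Matrix ι ι R) (γ : Matrix κ ι R)
    (x₁ x₂ x₃ y₁ y₂ : R) : Matrix (((ι ⊕ ι) ⊕ (ι ⊕ ι)) ⊕ κ) (ι ⊕ ι) R :=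
  fromCols (cpBarMonadColumnP α₁ α₂ ξ γ x₁ x₂ x₃) (cpBarMonadColumnQ ι κ y₁ y₂)

variable [Fintype ι] [Fintype κ] (α₁ α₂ ξ : Matrix ι ι R) (γ : Matrix κ ι R) (J : Matrix κ κ R)
  (x₁ x₂ x₃ y₁ y₂ : R)

lemma cpBarMonadColumnP_pairing_self :
    (cpBarMonadColumnP α₁ α₂ ξ γ x₁ x₂ x₃)ᵀ * (cpBarForm ξ J)ᵀ *
        cpBarMonadColumnP α₁ α₂ ξ γ x₁ x₂ x₃ =
      x₃ ^ 2 • (α₁ᵀ * ξ * α₂ - α₂ᵀ * ξ * α₁ + γᵀ * Jᵀ * γ) +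
        x₃ • (x₁ • (α₂ᵀ - α₂) - x₂ • (α₁ᵀ - α₁)) := by
  rw [cpBarMonadColumnP, cpBarColumn_pairing]
  simp only [transpose_sub, transpose_smul, transpose_mul, transpose_one, Matrix.mul_sub,
    Matrix.sub_mul, Matrix.mul_add, Matrix.mul_smul, Matrix.smul_mul, Matrix.mul_one,
    Matrix.one_mul, Matrix.mul_assoc]
  module

lemma cpBarMonadColumnP_pairing_cpBarMonadColumnQ :
    (cpBarMonadColumnP α₁ α₂ ξ γ x₁ x₂ x₃)ᵀ * (cpBarForm ξ J)ᵀ * cpBarMonadColumnQ ι κ y₁ y₂ =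
      -((x₁ * y₁ + x₂ * y₂) • (1 : Matrix ι ι R)) := by
  rw [cpBarMonadColumnP, cpBarMonadColumnQ, cpBarColumn_pairing]
  simp only [transpose_sub, transpose_smul, transpose_mul, transpose_one, Matrix.mul_neg,
    Matrix.mul_smul, Matrix.smul_mul, Matrix.mul_one, Matrix.mul_zero, add_zero]
  module

lemma cpBarMonadColumnQ_pairing_cpBarMonadColumnP :
    (cpBarMonadColumnQ ι κ y₁ y₂)ᵀ * (cpBarForm ξ J)ᵀ * cpBarMonadColumnP α₁ α₂ ξ γ x₁ x₂ x₃ =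
      (x₁ * y₁ + x₂ * y₂) • (1 : Matrix ι ι R) + x₃ • ((ξᵀ - ξ) * (y₁ • α₁ + y₂ • α₂)) := by
  rw [cpBarMonadColumnP, cpBarMonadColumnQ, cpBarColumn_pairing]
  simp only [transpose_neg, transpose_smul, transpose_one, transpose_zero, Matrix.mul_add,
    Matrix.mul_sub, Matrix.neg_mul, Matrix.sub_mul, Matrix.mul_smul, Matrix.smul_mul,
    Matrix.one_mul, Matrix.zero_mul]
  module

lemma cpBarMonadColumnQ_pairing_self :
    (cpBarMonadColumnQ ι κ y₁ y₂)ᵀ * (cpBarForm ξ J)ᵀ * cpBarMonadColumnQ ι κ y₁ y₂ = 0 := by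
  rw [cpBarMonadColumnQ, cpBarColumn_pairing]
  simp only [transpose_neg, transpose_smul, transpose_one, transpose_zero, Matrix.mul_neg,
    Matrix.neg_mul, Matrix.mul_smul, Matrix.smul_mul, Matrix.mul_one, Matrix.one_mul,
    Matrix.mul_zero, add_zero]
  module

lemma cpBarMonadMap_pairing_self :
    (cpBarMonadMap α₁ α₂ ξ γ x₁ x₂ x₃ y₁ y₂)ᵀ * (cpBarForm ξ J)ᵀ *
        cpBarMonadMap α₁ α₂ ξ γ x₁ x₂ x₃ y₁ y₂ =
      fromBlocks
        (x₃ ^ 2 • (α₁ᵀ * ξ * α₂ - α₂ᵀ * ξ * α₁ + γᵀ * Jᵀ * γ) +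
          x₃ • (x₁ • (α₂ᵀ - α₂) - x₂ • (α₁ᵀ - α₁)))
        (-((x₁ * y₁ + x₂ * y₂) • (1 : Matrix ι ι R)))
        ((x₁ * y₁ + x₂ * y₂) • 1 + x₃ • ((ξᵀ - ξ) * (y₁ • α₁ + y₂ • α₂)))
        0 := by
  rw [cpBarMonadMap, transpose_fromCols, fromRows_mul, fromRows_mul_fromCols,
    cpBarMonadColumnP_pairing_self, cpBarMonadColumnP_pairing_cpBarMonadColumnQ,
    cpBarMonadColumnQ_pairing_cpBarMonadColumnP, cpBarMonadColumnQ_pairing_self]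

lemma cpBarMonadMap_pairing_self_eq_zero_iff (hxy : x₁ * y₁ + x₂ * y₂ = 0) :
    (cpBarMonadMap α₁ α₂ ξ γ x₁ x₂ x₃ y₁ y₂)ᵀ * (cpBarForm ξ J)ᵀ *
        cpBarMonadMap α₁ α₂ ξ γ x₁ x₂ x₃ y₁ y₂ = 0 ↔
      x₃ ^ 2 • (α₁ᵀ * ξ * α₂ - α₂ᵀ * ξ * α₁ + γᵀ * Jᵀ * γ) +
          x₃ • (x₁ • (α₂ᵀ - α₂) - x₂ • (α₁ᵀ - α₁)) = 0 ∧
        x₃ • ((ξᵀ - ξ) * (y₁ • α₁ + y₂ • α₂)) = 0 := by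
  rw [cpBarMonadMap_pairing_self, hxy, ← fromBlocks_zero, fromBlocks_inj]
  simp

theorem sp_cpbar_monad_integrability_general :
    (∀ x₁ x₂ x₃ y₁ y₂ : R, x₁ * y₁ + x₂ * y₂ = 0 →
      (cpBarMonadMap α₁ α₂ ξ γ x₁ x₂ x₃ y₁ y₂)ᵀ * (cpBarForm ξ J)ᵀ *
        cpBarMonadMap α₁ α₂ ξ γ x₁ x₂ x₃ y₁ y₂ = 0) ↔
    α₁ᵀ = α₁ ∧ α₂ᵀ = α₂ ∧ ξᵀ * α₁ = ξ * α₁ ∧ ξᵀ * α₂ = ξ * α₂ ∧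
      α₁ * ξ * α₂ - α₂ * ξ * α₁ + γᵀ * Jᵀ * γ = 0 := by
  constructor
  · intro h
    have blocks x₁ x₂ x₃ y₁ y₂ (hxy : x₁ * y₁ + x₂ * y₂ = 0) :=
      (cpBarMonadMap_pairing_self_eq_zero_iff α₁ α₂ ξ γ J _ _ _ _ _ hxy).mp
        (h x₁ x₂ x₃ y₁ y₂ hxy)
    have integrable : α₁ᵀ * ξ * α₂ - α₂ᵀ * ξ * α₁ + γᵀ * Jᵀ * γ = 0 := by
      simpa using (blocks 0 0 1 0 0 (by simp)).1
    have symm₁ : α₁ᵀ = α₁ := by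
      simpa [integrable, sub_eq_zero, eq_comm] using (blocks 0 1 1 0 0 (by simp)).1
    have symm₂ : α₂ᵀ = α₂ := by
      simpa [integrable, sub_eq_zero] using (blocks 1 0 1 0 0 (by simp)).1
    have comm₁ : ξᵀ * α₁ = ξ * α₁ := by
      simpa [Matrix.sub_mul, sub_eq_zero] using (blocks 0 0 1 1 0 (by simp)).2
    have comm₂ : ξᵀ * α₂ = ξ * α₂ := by
      simpa [Matrix.sub_mul, sub_eq_zero] using (blocks 0 0 1 0 1 (by simp)).2
    exact ⟨symm₁, symm₂, comm₁, comm₂, by rwa [symm₁, symm₂] at integrable⟩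
  · rintro ⟨symm₁, symm₂, comm₁, comm₂, integrable⟩ x₁ x₂ x₃ y₁ y₂ hxy
    rw [cpBarMonadMap_pairing_self_eq_zero_iff (hxy := hxy)]
    simp [symm₁, symm₂, comm₁, comm₂, integrable, Matrix.mul_add, Matrix.sub_mul]

end MonadMap

lemma spCpA_eq_cpBarMonadMap {k m : ℕ} (α₁ α₂ ξ : Matrix (Fin k) (Fin k) ℂ)
    (γ : Matrix (Fin m ⊕ Fin m) (Fin k) ℂ) (p : ℂ × ℂ × ℂ) (q : ℂ × ℂ) :
    spCpA α₁ α₂ ξ γ p q = cpBarMonadMap α₁ α₂ ξ γ p.1 p.2.1 p.2.2 q.1 q.2 :=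
  rfl

lemma spCpBeta_eq_cpBarForm {k m : ℕ} (ξ : Matrix (Fin k) (Fin k) ℂ) :
    spCpBeta (m := m) ξ = cpBarForm ξ (stdSymplectic m) :=
  rfl

lemma stdSymplectic_transpose (m : ℕ) : (stdSymplectic m)ᵀ = -stdSymplectic m :=
  J_transpose (Fin m) ℂ

/-- For symmetric `α₁, α₂, ξ` and `γ ∈ M_{n×k}(ℂ)` (`n = 2m`): the anti-self-dual monad
condition `A(p,q)ᵀβᵀA(p,q) = 0` for all `p = (x₁,x₂,x₃) ∈ ℂ³`, `q = (y₁,y₂) ∈ ℂ²` with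
`x₁y₁ + x₂y₂ = 0` holds iff the integrability condition `α₁ξα₂ − α₂ξα₁ − γᵀJγ = 0` holds. -/
theorem sp_cpbar_monad_integrability {k m : ℕ}
    (α₁ α₂ ξ : Matrix (Fin k) (Fin k) ℂ)
    (h₁ : α₁ᵀ = α₁) (h₂ : α₂ᵀ = α₂) (hξ : ξᵀ = ξ)
    (γ : Matrix (Fin m ⊕ Fin m) (Fin k) ℂ) :
    (∀ (p : ℂ × ℂ × ℂ) (q : ℂ × ℂ), p.1 * q.1 + p.2.1 * q.2 = 0 →
      (spCpA α₁ α₂ ξ γ p q)ᵀ * (spCpBeta (m := m) ξ)ᵀ * spCpA α₁ α₂ ξ γ p q = 0) ↔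
    α₁ * ξ * α₂ - α₂ * ξ * α₁ - γᵀ * stdSymplectic m * γ = 0 := by
  simpa [spCpA_eq_cpBarMonadMap, spCpBeta_eq_cpBarForm, stdSymplectic_transpose, h₁, h₂, hξ,
    ← sub_eq_add_neg] using sp_cpbar_monad_integrability_general α₁ α₂ ξ γ (stdSymplectic m)
end

section
/- Let α₁, α₂, ξ ∈ M_{k×k}(ℂ) be antisymmetric matrices (αᵢᵀ = −αᵢ, ξᵀ = −ξ) and γ ∈ M_{n×k}(ℂ). Then A(p,q)ᵀ·βᵀ·A(p,q) = 0 for all p = (x₁,x₂,x₃) ∈ ℂ³ and q = (y₁,y₂) ∈ ℂ² with x₁y₁ + x₂y₂ = 0 (the self-dual monad condition for the SO(n) instanton construction on ℂP̄²), if and only if the integrability condition α₁ξα₂ − α₂ξα₁ + γᵀγ = 0 holds. -/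
/-!
For arbitrary `α₁, α₂, ξ, γ` the product `A(p,q)ᵀβᵀA(p,q)` can be computed in closed form. Its
lower right block vanishes identically, and its off-diagonal blocks are the scalar
`-(x₁y₁ + x₂y₂)`, plus `x₃ (ξ + ξᵀ)(y₁α₁ + y₂α₂)` in the lower left one. The upper left block is
the quadratic polynomial
`x₂x₃ (α₁ + α₁ᵀ) - x₁x₃ (α₂ + α₂ᵀ) + x₃² (α₂ᵀξα₁ - α₁ᵀξα₂ + γᵀγ)`.
The points of the quadric `x₁y₁ + x₂y₂ = 0` separate the coefficients, so the monad condition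
forces `(ξ + ξᵀ)α₁ = (ξ + ξᵀ)α₂ = 0` and the antisymmetry of `α₁` and `α₂`, after which the last
coefficient is `α₁ξα₂ - α₂ξα₁ + γᵀγ`.
-/

open Matrix

/-- The monad map `A(p,q)` for an `SO`-type `ℂP̄²`-configuration `(α₁, α₂, ξ, γ)`:
the 5×2 block matrix with first column `(x₃α₁ ; x₁·1 − x₃ξα₁ ; x₃α₂ ; x₂·1 − x₃ξα₂ ; x₃γ)`
and second column `(−y₂·1 ; 0 ; y₁·1 ; 0 ; 0)`. -/
noncomputable def soCpA {k n : ℕ} (α₁ α₂ ξ : Matrix (Fin k) (Fin k) ℂ)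
    (γ : Matrix (Fin n) (Fin k) ℂ) (p : ℂ × ℂ × ℂ) (q : ℂ × ℂ) :
    Matrix (((Fin k ⊕ Fin k) ⊕ (Fin k ⊕ Fin k)) ⊕ Fin n) (Fin k ⊕ Fin k) ℂ :=
  Matrix.fromCols
    (Matrix.fromRows
      (Matrix.fromRows
        (Matrix.fromRows (p.2.2 • α₁)
          (p.1 • (1 : Matrix (Fin k) (Fin k) ℂ) - p.2.2 • (ξ * α₁)))
        (Matrix.fromRows (p.2.2 • α₂)
          (p.2.1 • (1 : Matrix (Fin k) (Fin k) ℂ) - p.2.2 • (ξ * α₂))))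
      (p.2.2 • γ))
    (Matrix.fromRows
      (Matrix.fromRows
        (Matrix.fromRows (-(q.2 • (1 : Matrix (Fin k) (Fin k) ℂ))) (0 : Matrix (Fin k) (Fin k) ℂ))
        (Matrix.fromRows (q.1 • (1 : Matrix (Fin k) (Fin k) ℂ)) (0 : Matrix (Fin k) (Fin k) ℂ)))
      (0 : Matrix (Fin n) (Fin k) ℂ))

/-- The matrix `β` with `k×k` (and `n×n`) blocks
`[[0,0,ξ,1,0],[0,0,−1,0,0],[−ξ,−1,0,0,0],[1,0,0,0,0],[0,0,0,0,I_n]]`. -/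
noncomputable def soCpBeta {k n : ℕ} (ξ : Matrix (Fin k) (Fin k) ℂ) :
    Matrix (((Fin k ⊕ Fin k) ⊕ (Fin k ⊕ Fin k)) ⊕ Fin n)
      (((Fin k ⊕ Fin k) ⊕ (Fin k ⊕ Fin k)) ⊕ Fin n) ℂ :=
  Matrix.fromBlocks
    (Matrix.fromBlocks 0 (Matrix.fromBlocks ξ 1 (-1) 0) (Matrix.fromBlocks (-ξ) (-1) 1 0) 0)
    0 0 1

namespace SOMonad

/-- The row index of the monad map over arbitrary index types: four blocks of size `κ` and one of
size `ν`, bracketed as in `soCpA`. -/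
abbrev MonadIndex (κ ν : Type*) : Type _ := ((κ ⊕ κ) ⊕ (κ ⊕ κ)) ⊕ ν

variable {R κ ν l m : Type*} [CommRing R]

/-- A block column of shape `MonadIndex κ ν`, such as the two columns of the monad map. -/
def blockCol (a b c d : Matrix κ l R) (e : Matrix ν l R) : Matrix (MonadIndex κ ν) l R :=
  fromRows (fromRows (fromRows a b) (fromRows c d)) e

section Definitions

variable [DecidableEq κ]

/-- The matrix `β` of `soCpBeta` over an arbitrary commutative ring and arbitrary index types. The
type `ν` is explicit because `ξ` does not determine it. -/
def monadForm (ν : Type*) [DecidableEq ν] (ξ : Matrix κ κ R) :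
    Matrix (MonadIndex κ ν) (MonadIndex κ ν) R :=
  fromBlocks (fromBlocks 0 (fromBlocks ξ 1 (-1) 0) (fromBlocks (-ξ) (-1) 1 0) 0) 0 0 1

/-- The second block column of the monad map, which depends only on `q = (y₁, y₂)`. -/
def monadSndCol (q : R × R) : Matrix (MonadIndex κ ν) κ R :=
  blockCol (-(q.2 • 1)) 0 (q.1 • 1) 0 0

variable [Fintype κ]

/-- The first block column of the monad map, which depends only on `p = (x₁, x₂, x₃)`. -/
def monadFstCol (α₁ α₂ ξ : Matrix κ κ R) (γ : Matrix ν κ R) (p : R × R × R) :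
    Matrix (MonadIndex κ ν) κ R :=
  blockCol (p.2.2 • α₁) (p.1 • 1 - p.2.2 • (ξ * α₁)) (p.2.2 • α₂) (p.2.1 • 1 - p.2.2 • (ξ * α₂))
    (p.2.2 • γ)

/-- The monad map `A(p,q)` of `soCpA` over an arbitrary commutative ring and arbitrary index
types. -/
def monadMap (α₁ α₂ ξ : Matrix κ κ R) (γ : Matrix ν κ R) (p : R × R × R) (q : R × R) :
    Matrix (MonadIndex κ ν) (κ ⊕ κ) R :=
  fromCols (monadFstCol α₁ α₂ ξ γ p) (monadSndCol q)

/-- The matrix-valued bilinear pairing `uᵀβᵀv`, so that the monad condition says that the monad map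
is isotropic for it. -/
def monadPairing [Fintype ν] [DecidableEq ν] (ξ : Matrix κ κ R) (u : Matrix (MonadIndex κ ν) l R)
    (v : Matrix (MonadIndex κ ν) m R) : Matrix l m R :=
  uᵀ * (monadForm ν ξ)ᵀ * v

end Definitions

variable [Fintype κ] [Fintype ν]

theorem blockCol_transpose_mul_blockCol (a b c d : Matrix κ l R) (e : Matrix ν l R)
    (a' b' c' d' : Matrix κ m R) (e' : Matrix ν m R) :
    (blockCol a b c d e)ᵀ * blockCol a' b' c' d' e' =
      aᵀ * a' + bᵀ * b' + (cᵀ * c' + dᵀ * d') + eᵀ * e' := by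
  simp only [blockCol, transpose_fromRows, fromCols_mul_fromRows]

variable [DecidableEq κ] [DecidableEq ν]

theorem monadForm_transpose_mul_blockCol (ξ : Matrix κ κ R) (a b c d : Matrix κ l R)
    (e : Matrix ν l R) :
    (monadForm ν ξ)ᵀ * blockCol a b c d e =
      blockCol (d - ξᵀ * c) (-c) (ξᵀ * a - b) a e := by
  simp only [monadForm, blockCol, fromBlocks_transpose, fromBlocks_mul_fromRows, transpose_zero,
    transpose_one, transpose_neg, Matrix.zero_mul, Matrix.one_mul, Matrix.neg_mul, zero_add,
    add_zero, neg_add_eq_sub, ← sub_eq_add_neg]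

theorem monadPairing_blockCol (ξ : Matrix κ κ R) (a b c d : Matrix κ l R) (e : Matrix ν l R)
    (a' b' c' d' : Matrix κ m R) (e' : Matrix ν m R) :
    monadPairing ξ (blockCol a b c d e) (blockCol a' b' c' d' e') =
      aᵀ * (d' - ξᵀ * c') - bᵀ * c' + (cᵀ * (ξᵀ * a' - b') + dᵀ * a') + eᵀ * e' := by
  rw [monadPairing, Matrix.mul_assoc, monadForm_transpose_mul_blockCol,
    blockCol_transpose_mul_blockCol, Matrix.mul_neg, sub_eq_add_neg (aᵀ * _)]

theorem monadPairing_fromCols {l₁ l₂ m₁ m₂ : Type*} (ξ : Matrix κ κ R)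
    (u₁ : Matrix (MonadIndex κ ν) l₁ R) (u₂ : Matrix (MonadIndex κ ν) l₂ R)
    (v₁ : Matrix (MonadIndex κ ν) m₁ R) (v₂ : Matrix (MonadIndex κ ν) m₂ R) :
    monadPairing ξ (fromCols u₁ u₂) (fromCols v₁ v₂) =
      fromBlocks (monadPairing ξ u₁ v₁) (monadPairing ξ u₁ v₂)
        (monadPairing ξ u₂ v₁) (monadPairing ξ u₂ v₂) := by
  simp only [monadPairing, transpose_fromCols, fromRows_mul, mul_fromCols,
    fromCols_fromRows_eq_fromBlocks]

theorem monadPairing_monadFstCol_monadFstCol (α₁ α₂ ξ : Matrix κ κ R) (γ : Matrix ν κ R)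
    (p : R × R × R) :
    monadPairing ξ (monadFstCol α₁ α₂ ξ γ p) (monadFstCol α₁ α₂ ξ γ p) =
      (p.2.1 * p.2.2) • (α₁ + α₁ᵀ) - (p.1 * p.2.2) • (α₂ + α₂ᵀ) +
        (p.2.2 * p.2.2) • (α₂ᵀ * ξ * α₁ - α₁ᵀ * ξ * α₂ + γᵀ * γ) := by
  simp only [monadFstCol, monadPairing_blockCol, transpose_sub, transpose_smul, transpose_mul,
    transpose_one, Matrix.mul_sub, Matrix.sub_mul, Matrix.mul_smul, Matrix.smul_mul,
    Matrix.one_mul, Matrix.mul_one, Matrix.mul_assoc]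
  module

theorem monadPairing_monadFstCol_monadSndCol (α₁ α₂ ξ : Matrix κ κ R) (γ : Matrix ν κ R)
    (p : R × R × R) (q : R × R) :
    monadPairing ξ (monadFstCol α₁ α₂ ξ γ p) (monadSndCol q) =
      -(p.1 * q.1 + p.2.1 * q.2) • (1 : Matrix κ κ R) := by
  simp only [monadFstCol, monadSndCol, monadPairing_blockCol, transpose_sub, transpose_smul,
    transpose_mul, transpose_one, Matrix.mul_sub, Matrix.mul_neg, Matrix.mul_smul,
    Matrix.smul_mul, Matrix.mul_one, Matrix.mul_zero]
  module

theorem monadPairing_monadSndCol_monadFstCol (α₁ α₂ ξ : Matrix κ κ R) (γ : Matrix ν κ R)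
    (p : R × R × R) (q : R × R) :
    monadPairing ξ (monadSndCol q) (monadFstCol α₁ α₂ ξ γ p) =
      -(p.1 * q.1 + p.2.1 * q.2) • (1 : Matrix κ κ R) +
        p.2.2 • ((ξ + ξᵀ) * (q.1 • α₁ + q.2 • α₂)) := by
  simp only [monadFstCol, monadSndCol, monadPairing_blockCol, transpose_neg, transpose_smul,
    transpose_one, transpose_zero, Matrix.neg_mul, Matrix.mul_add, Matrix.add_mul,
    Matrix.mul_smul, Matrix.smul_mul, Matrix.one_mul, Matrix.zero_mul]
  module

theorem monadPairing_monadSndCol_monadSndCol (ξ : Matrix κ κ R) (q q' : R × R) :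
    monadPairing ξ (monadSndCol q : Matrix (MonadIndex κ ν) κ R) (monadSndCol q') =
      (q.2 * q'.1 - q.1 * q'.2) • ξᵀ := by
  simp only [monadSndCol, monadPairing_blockCol, transpose_neg, transpose_smul, transpose_one,
    transpose_zero, Matrix.mul_neg, Matrix.neg_mul, Matrix.mul_smul, Matrix.smul_mul,
    Matrix.one_mul, Matrix.mul_one, Matrix.zero_mul]
  module

theorem monadPairing_monadMap_self (α₁ α₂ ξ : Matrix κ κ R) (γ : Matrix ν κ R) (p : R × R × R)
    (q : R × R) :
    monadPairing ξ (monadMap α₁ α₂ ξ γ p q) (monadMap α₁ α₂ ξ γ p q) =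
      fromBlocks
        ((p.2.1 * p.2.2) • (α₁ + α₁ᵀ) - (p.1 * p.2.2) • (α₂ + α₂ᵀ) +
          (p.2.2 * p.2.2) • (α₂ᵀ * ξ * α₁ - α₁ᵀ * ξ * α₂ + γᵀ * γ))
        (-(p.1 * q.1 + p.2.1 * q.2) • 1)
        (-(p.1 * q.1 + p.2.1 * q.2) • 1 + p.2.2 • ((ξ + ξᵀ) * (q.1 • α₁ + q.2 • α₂)))
        0 := by
  rw [monadMap, monadPairing_fromCols, monadPairing_monadFstCol_monadFstCol,
    monadPairing_monadFstCol_monadSndCol, monadPairing_monadSndCol_monadFstCol,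
    monadPairing_monadSndCol_monadSndCol, mul_comm q.2, sub_self, zero_smul]

theorem monadPairing_monadMap_self_eq_zero_iff {α₁ α₂ ξ : Matrix κ κ R} {γ : Matrix ν κ R}
    {p : R × R × R} {q : R × R} (hpq : p.1 * q.1 + p.2.1 * q.2 = 0) :
    monadPairing ξ (monadMap α₁ α₂ ξ γ p q) (monadMap α₁ α₂ ξ γ p q) = 0 ↔
      (p.2.1 * p.2.2) • (α₁ + α₁ᵀ) - (p.1 * p.2.2) • (α₂ + α₂ᵀ) +
          (p.2.2 * p.2.2) • (α₂ᵀ * ξ * α₁ - α₁ᵀ * ξ * α₂ + γᵀ * γ) = 0 ∧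
        p.2.2 • ((ξ + ξᵀ) * (q.1 • α₁ + q.2 • α₂)) = 0 := by
  rw [monadPairing_monadMap_self, hpq, ← fromBlocks_zero, fromBlocks_inj]
  simp

end SOMonad

open SOMonad in
theorem so_cpbar_monad_integrability_general {R κ ν : Type*} [CommRing R] [Fintype κ] [Fintype ν]
    [DecidableEq κ] [DecidableEq ν] (α₁ α₂ ξ : Matrix κ κ R) (γ : Matrix ν κ R) :
    (∀ (p : R × R × R) (q : R × R), p.1 * q.1 + p.2.1 * q.2 = 0 →
      (monadMap α₁ α₂ ξ γ p q)ᵀ * (monadForm ν ξ)ᵀ * monadMap α₁ α₂ ξ γ p q = 0) ↔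
    α₁ᵀ = -α₁ ∧ α₂ᵀ = -α₂ ∧ (ξ + ξᵀ) * α₁ = 0 ∧ (ξ + ξᵀ) * α₂ = 0 ∧
      α₁ * ξ * α₂ - α₂ * ξ * α₁ + γᵀ * γ = 0 := by
  constructor
  · intro h
    have h_blocks (p : R × R × R) (q : R × R) (hpq : p.1 * q.1 + p.2.1 * q.2 = 0) :=
      (monadPairing_monadMap_self_eq_zero_iff hpq).1 (h p q hpq)
    have h_sq : α₂ᵀ * ξ * α₁ - α₁ᵀ * ξ * α₂ + γᵀ * γ = 0 := by
      simpa using (h_blocks (0, 0, 1) (0, 0) (by simp)).1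
    have hα₁ : α₁ᵀ = -α₁ := by
      simpa [h_sq, add_eq_zero_iff_eq_neg'] using (h_blocks (0, 1, 1) (0, 0) (by simp)).1
    have hα₂ : α₂ᵀ = -α₂ := by
      simpa [h_sq, add_eq_zero_iff_eq_neg', -neg_add_rev] using
        (h_blocks (1, 0, 1) (0, 0) (by simp)).1
    refine ⟨hα₁, hα₂, ?_, ?_, ?_⟩
    · simpa using (h_blocks (0, 0, 1) (1, 0) (by simp)).2
    · simpa using (h_blocks (0, 0, 1) (0, 1) (by simp)).2
    · simpa [hα₁, hα₂, neg_add_eq_sub] using h_sq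
  · rintro ⟨hα₁, hα₂, hξα₁, hξα₂, h_int⟩ p q hpq
    have h_sq : α₂ᵀ * ξ * α₁ - α₁ᵀ * ξ * α₂ + γᵀ * γ = 0 := by
      simpa [hα₁, hα₂, neg_add_eq_sub] using h_int
    refine (monadPairing_monadMap_self_eq_zero_iff hpq).2 ?_
    rw [h_sq]
    simp [hα₁, hα₂, Matrix.mul_add, hξα₁, hξα₂]

/-- For antisymmetric `α₁, α₂, ξ` and `γ ∈ M_{n×k}(ℂ)`: the self-dual monad condition
`A(p,q)ᵀβᵀA(p,q) = 0` for all `p = (x₁,x₂,x₃) ∈ ℂ³`, `q = (y₁,y₂) ∈ ℂ²` with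
`x₁y₁ + x₂y₂ = 0` holds iff the integrability condition `α₁ξα₂ − α₂ξα₁ + γᵀγ = 0` holds. -/
theorem so_cpbar_monad_integrability {k n : ℕ}
    (α₁ α₂ ξ : Matrix (Fin k) (Fin k) ℂ)
    (h₁ : α₁ᵀ = -α₁) (h₂ : α₂ᵀ = -α₂) (hξ : ξᵀ = -ξ)
    (γ : Matrix (Fin n) (Fin k) ℂ) :
    (∀ (p : ℂ × ℂ × ℂ) (q : ℂ × ℂ), p.1 * q.1 + p.2.1 * q.2 = 0 →
      (soCpA α₁ α₂ ξ γ p q)ᵀ * (soCpBeta (n := n) ξ)ᵀ * soCpA α₁ α₂ ξ γ p q = 0) ↔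
    α₁ * ξ * α₂ - α₂ * ξ * α₁ + γᵀ * γ = 0 :=
  (so_cpbar_monad_integrability_general α₁ α₂ ξ γ).trans (by simp [h₁, h₂, hξ])
end

section
/- The action of GL(k,ℂ)×GL(k,ℂ) on nondegenerate integrable ℂP̄²-configurations is free: if (a₁, a₂, x, b, c) is an integrable (a₁xa₂ − a₂xa₁ + bc = 0) and nondegenerate ℂP̄²-configuration and (g,h) ∈ GL(k,ℂ)×GL(k,ℂ) satisfies ga₁h⁻¹ = a₁, ga₂h⁻¹ = a₂, hxg⁻¹ = x, gb = b and ch⁻¹ = c, then g = 1 and h = 1. -/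
open Matrix

/-!
Put `G = g - 1` and `H = h - 1`, so that `G aᵢ = aᵢ H`, `H x = x G`, `G b = 0` and `c H = 0`.

On `range H`, integrability says that `a₁ x a₂ = a₂ x a₁`. If a member `y₁ a₁ + y₂ a₂` of the
pencil had a kernel there, this kernel would be stable under `x (r₁ a₁ + r₂ a₂)` for a
complementary `(r₁, r₂)`, and an eigenvector of that operator would yield a kernel vector of some
`A(p, y)`. So every nonzero member of the pencil is injective on `range H`. The transposed
configuration exchanges the roles of `A` and `B`, and the same argument for it shows that every
nonzero member of the pencil maps `range H` onto `range G`. Over an algebraically closed field a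
pencil `E → F` whose nonzero members are all bijective forces `E = 0`, because `f₁ - t f₂` is
singular when `t` is an eigenvalue of `f₂⁻¹ f₁`.
-/

open Module

section LinearAlgebra

variable {K V W : Type*} [Field K] [AddCommGroup V] [Module K V] [AddCommGroup W] [Module K W]

theorem exists_hasEigenvector_mem [IsAlgClosed K] [FiniteDimensional K V] {f : End K V}
    {N : Submodule K V} (hN : N ≠ ⊥) (hf : ∀ u ∈ N, f u ∈ N) :
    ∃ u ∈ N, ∃ μ : K, f.HasEigenvector μ u := by
  have : Nontrivial N := Submodule.nontrivial_iff_ne_bot.2 hN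
  obtain ⟨μ, hμ⟩ := End.exists_eigenvalue (f.restrict hf)
  obtain ⟨u, hu⟩ := hμ.exists_hasEigenvector
  have hfu : f u = μ • (u : V) := congrArg Subtype.val hu.apply_eq_smul
  exact ⟨u, u.2, μ, End.mem_eigenspace_iff.2 hfu, fun h ↦ hu.2 (Subtype.ext h)⟩

theorem subsingleton_of_injective_pencil [IsAlgClosed K] [FiniteDimensional K V]
    {f₁ f₂ : V →ₗ[K] W} (hrange : LinearMap.range f₁ ≤ LinearMap.range f₂)
    (hinj : ∀ y : K × K, y ≠ 0 → Function.Injective (y.1 • f₁ + y.2 • f₂)) :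
    Subsingleton V := by
  by_contra! hV
  have hf₂ : Function.Injective f₂ := by simpa using hinj (0, 1) (by simp)
  let e := LinearEquiv.ofInjective f₂ hf₂
  let f₁' := f₁.codRestrict (LinearMap.range f₂) fun u ↦ hrange ⟨u, rfl⟩
  obtain ⟨t, ht⟩ := End.exists_eigenvalue (e.symm.toLinearMap ∘ₗ f₁')
  obtain ⟨u, hu⟩ := ht.exists_hasEigenvector
  have hfu : f₁ u = t • f₂ u := by
    have h : f₁' u = e (t • u) := e.symm_apply_eq.1 hu.apply_eq_smul
    simpa [e, f₁'] using congrArg Subtype.val h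
  exact hu.2 <| (injective_iff_map_eq_zero _).1 (hinj (1, -t) (by simp)) u (by simp [hfu])

theorem range_comp_eq_of_disjoint_dualMap {X : Type*} [AddCommGroup X] [Module K X]
    {f : V →ₗ[K] W} {g : W →ₗ[K] X}
    (h : Disjoint (LinearMap.range g.dualMap) (LinearMap.ker f.dualMap)) :
    LinearMap.range (g ∘ₗ f) = LinearMap.range g := by
  rw [← Subspace.dualAnnihilator_inj, ← LinearMap.ker_dualMap_eq_dualAnnihilator_range,
    ← LinearMap.ker_dualMap_eq_dualAnnihilator_range, ← LinearMap.dualMap_comp_dualMap]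
  refine le_antisymm (fun φ hφ ↦ ?_) (LinearMap.ker_le_ker_comp _ _)
  exact LinearMap.disjoint_ker.1 h (g.dualMap φ) ⟨φ, rfl⟩ hφ

end LinearAlgebra

/-- A `ℂP̄²`-configuration `(a₁, a₂, x, b, c)` in coordinate-free form, over an arbitrary field. The
two factors of the symmetry group act on different spaces: `g` on `W` and `h` on `V`. -/
structure CPbarConfig (K V W U : Type*) [Field K] [AddCommGroup V] [Module K V]
    [AddCommGroup W] [Module K W] [AddCommGroup U] [Module K U] where
  a₁ : V →ₗ[K] W
  a₂ : V →ₗ[K] W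
  x : W →ₗ[K] V
  b : U →ₗ[K] W
  c : V →ₗ[K] U

namespace CPbarConfig

section General

variable {K V W U : Type*} [Field K] [AddCommGroup V] [Module K V] [AddCommGroup W] [Module K W]
  [AddCommGroup U] [Module K U] (C : CPbarConfig K V W U)

/-- The equation `a₁ x a₂ - a₂ x a₁ + b c = 0`. -/
def IsIntegrable : Prop :=
  C.a₁ ∘ₗ C.x ∘ₗ C.a₂ - C.a₂ ∘ₗ C.x ∘ₗ C.a₁ + C.b ∘ₗ C.c = 0

/-- The monad map `A(p, q)`, with the blocks of its target in the order of the `5 × 2` matrix. -/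
def monadA (p : K × K × K) (q : K × K) : V × W →ₗ[K] W × V × W × V × U :=
  ((p.2.2 • C.a₁).coprod (-(q.2 • LinearMap.id))).prod <|
  ((p.1 • LinearMap.id - p.2.2 • (C.x ∘ₗ C.a₁)).coprod 0).prod <|
  ((p.2.2 • C.a₂).coprod (q.1 • LinearMap.id)).prod <|
  ((p.2.1 • LinearMap.id - p.2.2 • (C.x ∘ₗ C.a₂)).coprod 0).prod <|
  (p.2.2 • C.c).coprod 0

/-- The monad map `B(p, q)`, with the blocks of its source in the order of the `2 × 5` matrix. -/
def monadB (p : K × K × K) (q : K × K) : W × V × W × V × U →ₗ[K] W × V :=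
  ((p.2.1 • LinearMap.id).prod (q.1 • C.x)).coprod <|
  ((p.2.2 • C.a₂).prod (q.1 • LinearMap.id)).coprod <|
  ((-(p.1 • LinearMap.id)).prod (q.2 • C.x)).coprod <|
  ((-(p.2.2 • C.a₁)).prod (q.2 • LinearMap.id)).coprod <|
  (p.2.2 • C.b).prod 0

/-- The half of nondegeneracy that concerns `A`. -/
def IsMonadInjective : Prop :=
  ∀ (p : K × K × K) (q : K × K), p ≠ 0 → q ≠ 0 → p.1 * q.1 + p.2.1 * q.2 = 0 →
    Function.Injective (C.monadA p q)

/-- The half of nondegeneracy that concerns `B`. -/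
def IsMonadSurjective : Prop :=
  ∀ (p : K × K × K) (q : K × K), p ≠ 0 → q ≠ 0 → p.1 * q.1 + p.2.1 * q.2 = 0 →
    Function.Surjective (C.monadB p q)

/-- The pencil of maps `y₁ a₁ + y₂ a₂` spanned by `a₁` and `a₂`. -/
def pencil (y : K × K) : V →ₗ[K] W :=
  y.1 • C.a₁ + y.2 • C.a₂

/-- The transposed configuration. Transposition reverses the commutator in the integrability
equation, whence the sign. -/
def dual : CPbarConfig K (Dual K W) (Dual K V) (Dual K U) where
  a₁ := C.a₁.dualMap
  a₂ := C.a₂.dualMap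
  x := C.x.dualMap
  b := -C.c.dualMap
  c := C.b.dualMap

/-- The Lie algebra of the stabilizer of `C`: pairs `(G, H)` whose infinitesimal action
`(G a₁ - a₁ H, G a₂ - a₂ H, H x - x G, G b, -c H)` on `C` vanishes. -/
structure IsInfinitesimalStabilizer (G : End K W) (H : End K V) : Prop where
  a₁ : G ∘ₗ C.a₁ = C.a₁ ∘ₗ H
  a₂ : G ∘ₗ C.a₂ = C.a₂ ∘ₗ H
  x : H ∘ₗ C.x = C.x ∘ₗ G
  b : G ∘ₗ C.b = 0
  c : C.c ∘ₗ H = 0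

variable {C} {G : End K W} {H : End K V}

theorem monadA_apply (p : K × K × K) (q : K × K) (z : V × W) :
    C.monadA p q z =
      (p.2.2 • C.a₁ z.1 - q.2 • z.2, p.1 • z.1 - p.2.2 • C.x (C.a₁ z.1),
        p.2.2 • C.a₂ z.1 + q.1 • z.2, p.2.1 • z.1 - p.2.2 • C.x (C.a₂ z.1), p.2.2 • C.c z.1) := by
  simp [monadA, sub_eq_add_neg]

theorem monadB_apply (p : K × K × K) (q : K × K) (t : W × V × W × V × U) :
    C.monadB p q t =
      (p.2.1 • t.1 + p.2.2 • C.a₂ t.2.1 - p.1 • t.2.2.1 - p.2.2 • C.a₁ t.2.2.2.1 +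
          p.2.2 • C.b t.2.2.2.2,
        q.1 • C.x t.1 + q.1 • t.2.1 + q.2 • C.x t.2.2.1 + q.2 • t.2.2.2.1) := by
  simp [monadB, sub_eq_add_neg, add_assoc]

theorem IsIntegrable.commute_of_mem_ker (hC : C.IsIntegrable) {u : V} (hu : C.c u = 0) :
    C.a₁ (C.x (C.a₂ u)) = C.a₂ (C.x (C.a₁ u)) := by
  have h := LinearMap.congr_fun hC u
  simpa [hu, sub_eq_zero] using h

theorem dual_pencil (y : K × K) : C.dual.pencil y = (C.pencil y).dualMap := by
  ext
  simp [pencil, dual]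

theorem IsIntegrable.dual (hC : C.IsIntegrable) : C.dual.IsIntegrable := by
  ext φ u
  have h := congrArg φ (LinearMap.congr_fun hC u)
  simp only [LinearMap.add_apply, LinearMap.sub_apply, LinearMap.comp_apply,
    LinearMap.zero_apply, map_add, map_sub, map_zero] at h
  simp only [CPbarConfig.dual, LinearMap.add_apply, LinearMap.sub_apply, LinearMap.comp_apply,
    LinearMap.neg_apply, LinearMap.dualMap_apply, LinearMap.zero_apply]
  linear_combination -h

theorem coprod_comp_monadB_of_dual_monadA_eq_zero {p : K × K × K} {q : K × K} {φ : Dual K W}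
    {ψ : Dual K V} (h : C.dual.monadA p q (φ, ψ) = 0) : φ.coprod ψ ∘ₗ C.monadB p q = 0 := by
  simp only [monadA_apply, dual, Prod.mk_eq_zero, sub_eq_zero, LinearMap.ext_iff,
    LinearMap.smul_apply, LinearMap.add_apply, LinearMap.dualMap_apply, LinearMap.zero_apply,
    smul_eq_mul] at h
  obtain ⟨h₁, h₂, h₃, h₄, h₅⟩ := h
  refine LinearMap.ext fun ⟨w₁, v₁, w₂, v₂, u⟩ ↦ ?_
  simp only [monadB_apply, LinearMap.comp_apply, LinearMap.coprod_apply, map_add, map_sub,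
    map_smul, smul_eq_mul, LinearMap.zero_apply]
  linear_combination h₄ w₁ + h₃ (C.x w₁) + h₃ v₁ - h₂ w₂ - h₁ (C.x w₂) - h₁ v₂ + h₅ u

theorem IsMonadSurjective.dual (hC : C.IsMonadSurjective) : C.dual.IsMonadInjective := by
  intro p q hp hq hpq
  rw [injective_iff_map_eq_zero]
  rintro ⟨φ, ψ⟩ h
  have h0 : φ.coprod ψ = 0 :=
    (LinearMap.cancel_right (hC p q hp hq hpq)).1 <|
      (coprod_comp_monadB_of_dual_monadA_eq_zero h).trans (LinearMap.zero_comp _).symm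
  exact (LinearMap.coprodEquiv K).map_eq_zero_iff.1 h0

theorem IsInfinitesimalStabilizer.dual (hGH : C.IsInfinitesimalStabilizer G H) :
    C.dual.IsInfinitesimalStabilizer H.dualMap G.dualMap where
  a₁ := by simp only [CPbarConfig.dual, LinearMap.dualMap_comp_dualMap, hGH.a₁]
  a₂ := by simp only [CPbarConfig.dual, LinearMap.dualMap_comp_dualMap, hGH.a₂]
  x := by simp only [CPbarConfig.dual, LinearMap.dualMap_comp_dualMap, hGH.x]
  b := by
    ext φ z
    simpa [CPbarConfig.dual] using congrArg φ (LinearMap.congr_fun hGH.c z)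
  c := by
    ext φ z
    simpa [CPbarConfig.dual] using congrArg φ (LinearMap.congr_fun hGH.b z)

theorem IsInfinitesimalStabilizer.pencil_comp (hGH : C.IsInfinitesimalStabilizer G H)
    (y : K × K) : G ∘ₗ C.pencil y = C.pencil y ∘ₗ H := by
  simp only [pencil, LinearMap.comp_add, LinearMap.comp_smul, LinearMap.add_comp,
    LinearMap.smul_comp, hGH.a₁, hGH.a₂]

theorem IsInfinitesimalStabilizer.x_pencil_mem_range (hGH : C.IsInfinitesimalStabilizer G H)
    (y : K × K) {u : V} (hu : u ∈ LinearMap.range H) :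
    C.x (C.pencil y u) ∈ LinearMap.range H := by
  obtain ⟨z, rfl⟩ := hu
  refine ⟨C.x (C.pencil y z), ?_⟩
  have hx := LinearMap.congr_fun hGH.x (C.pencil y z)
  have hy := LinearMap.congr_fun (hGH.pencil_comp y) z
  simp only [LinearMap.comp_apply] at hx hy
  rw [hx, hy]

theorem pencil_x_pencil_comm {u : V} (hu : C.a₁ (C.x (C.a₂ u)) = C.a₂ (C.x (C.a₁ u)))
    (y r : K × K) :
    C.pencil y (C.x (C.pencil r u)) = C.pencil r (C.x (C.pencil y u)) := by
  simp only [pencil, LinearMap.add_apply, LinearMap.smul_apply, map_add, map_smul, hu]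
  module

theorem exists_eigenvector_of_pencil_not_disjoint [IsAlgClosed K] [FiniteDimensional K V]
    {S : Submodule K V} (hS : ∀ r, ∀ u ∈ S, C.x (C.pencil r u) ∈ S)
    (hcomm : ∀ u ∈ S, C.a₁ (C.x (C.a₂ u)) = C.a₂ (C.x (C.a₁ u))) {y : K × K} (hy : y ≠ 0)
    (hker : ¬ Disjoint S (LinearMap.ker (C.pencil y))) :
    ∃ u ∈ S, u ≠ 0 ∧ ∃ (v : W) (μ : K),
      C.x v = μ • u ∧ C.a₁ u = y.2 • v ∧ C.a₂ u = -(y.1 • v) := by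
  obtain ⟨s, r, hsr⟩ : IsCoprime y.1 y.2 := by
    rw [Semifield.isCoprime_iff, ← not_and_or]
    exact fun h ↦ hy (Prod.ext h.1 h.2)
  let N := S ⊓ LinearMap.ker (C.pencil y)
  have hN : ∀ u ∈ N, (C.x ∘ₗ C.pencil (r, -s)) u ∈ N := by
    rintro u ⟨huS, huy⟩
    refine ⟨hS _ u huS, ?_⟩
    rw [SetLike.mem_coe, LinearMap.mem_ker] at huy ⊢
    rw [LinearMap.comp_apply, pencil_x_pencil_comm (hcomm u huS), huy, map_zero, map_zero]
  obtain ⟨u, ⟨huS, huy⟩, μ, hu⟩ := exists_hasEigenvector_mem (mt disjoint_iff.2 hker) hN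
  have huy' : y.1 • C.a₁ u + y.2 • C.a₂ u = 0 := huy
  refine ⟨u, huS, hu.2, C.pencil (r, -s) u, μ, hu.apply_eq_smul, ?_, ?_⟩ <;>
    simp only [pencil, LinearMap.add_apply, LinearMap.smul_apply]
  · linear_combination (norm := module) -(hsr • C.a₁ u) + s • huy'
  · linear_combination (norm := module) -(hsr • C.a₂ u) + r • huy'

theorem monadA_apply_eq_zero_of_eigenvector {u : V} {v : W} {μ : K} {y : K × K} (hc : C.c u = 0)
    (hx : C.x v = μ • u) (h₁ : C.a₁ u = y.2 • v) (h₂ : C.a₂ u = -(y.1 • v)) :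
    C.monadA (y.2 * μ, -(y.1 * μ), 1) y (u, v) = 0 := by
  simp [monadA_apply, hc, hx, h₁, h₂, mul_smul]

theorem IsMonadInjective.disjoint_ker_pencil [IsAlgClosed K] [FiniteDimensional K V]
    (hinj : C.IsMonadInjective) (hC : C.IsIntegrable) (hGH : C.IsInfinitesimalStabilizer G H)
    {y : K × K} (hy : y ≠ 0) : Disjoint (LinearMap.range H) (LinearMap.ker (C.pencil y)) := by
  have hc : ∀ u ∈ LinearMap.range H, C.c u = 0 := by
    rintro _ ⟨z, rfl⟩
    exact LinearMap.congr_fun hGH.c z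
  by_contra hker
  obtain ⟨u, huH, hu, v, μ, hx, h₁, h₂⟩ := exists_eigenvector_of_pencil_not_disjoint
    (fun r _ ↦ hGH.x_pencil_mem_range r) (fun u hu ↦ hC.commute_of_mem_ker (hc u hu)) hy hker
  have hA := hinj (y.2 * μ, -(y.1 * μ), 1) y (by simp) hy (by ring)
  have huv := (injective_iff_map_eq_zero _).1 hA (u, v)
    (monadA_apply_eq_zero_of_eigenvector (hc u huH) hx h₁ h₂)
  exact hu (congrArg Prod.fst huv)

theorem IsMonadSurjective.range_pencil_comp [IsAlgClosed K] [FiniteDimensional K W]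
    (hsurj : C.IsMonadSurjective) (hC : C.IsIntegrable) (hGH : C.IsInfinitesimalStabilizer G H)
    {y : K × K} (hy : y ≠ 0) : LinearMap.range (C.pencil y ∘ₗ H) = LinearMap.range G := by
  rw [← hGH.pencil_comp]
  apply range_comp_eq_of_disjoint_dualMap
  rw [← dual_pencil]
  exact hsurj.dual.disjoint_ker_pencil hC.dual hGH.dual hy

theorem IsInfinitesimalStabilizer.eq_zero [IsAlgClosed K] [FiniteDimensional K V]
    [FiniteDimensional K W] (hGH : C.IsInfinitesimalStabilizer G H) (hC : C.IsIntegrable)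
    (hinj : C.IsMonadInjective) (hsurj : C.IsMonadSurjective) : G = 0 ∧ H = 0 := by
  have hrange {y : K × K} (hy : y ≠ 0) := hsurj.range_pencil_comp hC hGH hy
  have hsub : Subsingleton (LinearMap.range H) := by
    refine subsingleton_of_injective_pencil (f₁ := C.a₁.domRestrict _)
      (f₂ := C.a₂.domRestrict _) ?_ fun y hy ↦ ?_
    · have h₁ := hrange (y := (1, 0)) (by simp)
      have h₂ := hrange (y := (0, 1)) (by simp)
      simp only [pencil, one_smul, zero_smul, add_zero, zero_add, LinearMap.range_comp] at h₁ h₂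
      rw [LinearMap.range_domRestrict, LinearMap.range_domRestrict, h₁, h₂]
    · exact LinearMap.injective_domRestrict_iff.2 (hinj.disjoint_ker_pencil hC hGH hy)
  have hH : H = 0 := LinearMap.range_eq_bot.1 (Submodule.subsingleton_iff_eq_bot.1 hsub)
  refine ⟨LinearMap.range_eq_bot.1 ?_, hH⟩
  rw [← hrange (y := (1, 0)) (by simp), hH, LinearMap.comp_zero, LinearMap.range_zero]

end General

section OfMatrix

variable {k n : ℕ} {a₁ a₂ x : Matrix (Fin k) (Fin k) ℂ} {b : Matrix (Fin k) (Fin n) ℂ}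
  {c : Matrix (Fin n) (Fin k) ℂ}

/-- The configuration of the linear maps with matrices `a₁, a₂, x, b, c`. -/
noncomputable def ofMatrix (a₁ a₂ x : Matrix (Fin k) (Fin k) ℂ) (b : Matrix (Fin k) (Fin n) ℂ)
    (c : Matrix (Fin n) (Fin k) ℂ) :
    CPbarConfig ℂ (Fin k → ℂ) (Fin k → ℂ) (Fin n → ℂ) where
  a₁ := toLin' a₁
  a₂ := toLin' a₂
  x := toLin' x
  b := toLin' b
  c := toLin' c

theorem isIntegrable_ofMatrix (h : a₁ * x * a₂ - a₂ * x * a₁ + b * c = 0) :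
    (ofMatrix a₁ a₂ x b c).IsIntegrable := by
  simp only [IsIntegrable, ofMatrix, ← toLin'_mul, ← map_sub, ← map_add, ← mul_assoc, h, map_zero]

/-- The vector in the middle term of the monad with the given five blocks. -/
def joinBlocks {ι ν R : Type*} :
    (ι → R) × (ι → R) × (ι → R) × (ι → R) × (ν → R) ≃ (((ι ⊕ ι) ⊕ (ι ⊕ ι)) ⊕ ν → R) where
  toFun t := Sum.elim (Sum.elim (Sum.elim t.1 t.2.1) (Sum.elim t.2.2.1 t.2.2.2.1)) t.2.2.2.2
  invFun s := (s ∘ .inl ∘ .inl ∘ .inl, s ∘ .inl ∘ .inl ∘ .inr, s ∘ .inl ∘ .inr ∘ .inl,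
    s ∘ .inl ∘ .inr ∘ .inr, s ∘ .inr)
  left_inv _ := rfl
  right_inv s := by ext (((i | i) | (i | i)) | i) <;> rfl

theorem joinBlocks_apply {ι ν R : Type*}
    (t : (ι → R) × (ι → R) × (ι → R) × (ι → R) × (ν → R)) :
    joinBlocks t =
      Sum.elim (Sum.elim (Sum.elim t.1 t.2.1) (Sum.elim t.2.2.1 t.2.2.2.1)) t.2.2.2.2 :=
  rfl

theorem cpbarA_mulVec_sumElim (p : ℂ × ℂ × ℂ) (q : ℂ × ℂ) (z : (Fin k → ℂ) × (Fin k → ℂ)) :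
    cpbarA a₁ a₂ x c p q *ᵥ Sum.elim z.1 z.2 =
      joinBlocks ((ofMatrix a₁ a₂ x b c).monadA p q z) := by
  rw [cpbarA, fromCols_mulVec_sumElim, monadA_apply, joinBlocks_apply]
  ext (((i | i) | (i | i)) | i) <;>
    simp [ofMatrix, fromRows_mulVec, sub_mulVec, smul_mulVec, neg_mulVec, ← sub_eq_add_neg]

theorem cpbarB_mulVec_joinBlocks (p : ℂ × ℂ × ℂ) (q : ℂ × ℂ)
    (t : (Fin k → ℂ) × (Fin k → ℂ) × (Fin k → ℂ) × (Fin k → ℂ) × (Fin n → ℂ)) :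
    cpbarB a₁ a₂ x b p q *ᵥ joinBlocks t =
      Sum.elim ((ofMatrix a₁ a₂ x b c).monadB p q t).1
        ((ofMatrix a₁ a₂ x b c).monadB p q t).2 := by
  rw [cpbarB, fromRows_mulVec, monadB_apply, joinBlocks_apply]
  congr 1 <;>
    simp only [ofMatrix, toLin'_apply, fromCols_mulVec_sumElim, smul_mulVec, neg_mulVec,
      one_mulVec, zero_mulVec] <;>
    module

theorem injective_monadA_ofMatrix {p : ℂ × ℂ × ℂ} {q : ℂ × ℂ}
    (h : Function.Injective (cpbarA a₁ a₂ x c p q).mulVec) :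
    Function.Injective ((ofMatrix a₁ a₂ x b c).monadA p q) := by
  rw [← joinBlocks.comp_injective]
  convert h.comp (Equiv.sumArrowEquivProdArrow _ _ _).symm.injective
  exact funext fun z ↦ (cpbarA_mulVec_sumElim p q z).symm

theorem surjective_monadB_ofMatrix {p : ℂ × ℂ × ℂ} {q : ℂ × ℂ}
    (h : Function.Surjective (cpbarB a₁ a₂ x b p q).mulVec) :
    Function.Surjective ((ofMatrix a₁ a₂ x b c).monadB p q) := by
  rw [← (Equiv.sumArrowEquivProdArrow _ _ _).symm.comp_surjective]
  convert h.comp joinBlocks.surjective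
  exact funext fun t ↦ (cpbarB_mulVec_joinBlocks p q t).symm

end OfMatrix

end CPbarConfig

theorem toLin'_eq_comp_of_mul_inv_eq {R m n : Type*} [CommRing R] [Fintype n] [DecidableEq n]
    {h : Matrix n n R} (hh : IsUnit h) {a a' : Matrix m n R} (ha : a * h⁻¹ = a') :
    toLin' a = toLin' a' ∘ₗ toLin' h := by
  rw [← toLin'_mul, ← ha, nonsing_inv_mul_cancel_right _ _ ((isUnit_iff_isUnit_det h).1 hh)]

open CPbarConfig

theorem cpbar_action_free_general {K V W U : Type*} [Field K] [IsAlgClosed K]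
    [AddCommGroup V] [Module K V] [FiniteDimensional K V]
    [AddCommGroup W] [Module K W] [FiniteDimensional K W] [AddCommGroup U] [Module K U]
    {C : CPbarConfig K V W U} (hC : C.IsIntegrable) (hinj : C.IsMonadInjective)
    (hsurj : C.IsMonadSurjective) {g : End K W} {h : End K V}
    (h₁ : g ∘ₗ C.a₁ = C.a₁ ∘ₗ h) (h₂ : g ∘ₗ C.a₂ = C.a₂ ∘ₗ h) (hx : h ∘ₗ C.x = C.x ∘ₗ g)
    (hb : g ∘ₗ C.b = C.b) (hc : C.c ∘ₗ h = C.c) : g = 1 ∧ h = 1 := by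
  have hGH : C.IsInfinitesimalStabilizer (g - 1) (h - 1) := by
    constructor <;>
      simp only [LinearMap.sub_comp, LinearMap.comp_sub, h₁, h₂, hx, hb, hc, End.one_eq_id,
        LinearMap.id_comp, LinearMap.comp_id, sub_self]
  exact (hGH.eq_zero hC hinj hsurj).imp sub_eq_zero.1 sub_eq_zero.1

/-- The action of `GL(k,ℂ)×GL(k,ℂ)` on nondegenerate integrable `ℂP̄²`-configurations is
free: if `(a₁, a₂, x, b, c)` is integrable and nondegenerate and `(g,h)` fixes it, then
`g = 1` and `h = 1`. -/
theorem cpbar_action_free {k n : ℕ}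
    (a₁ a₂ x : Matrix (Fin k) (Fin k) ℂ)
    (b : Matrix (Fin k) (Fin n) ℂ) (c : Matrix (Fin n) (Fin k) ℂ)
    (hint : a₁ * x * a₂ - a₂ * x * a₁ + b * c = 0)
    (hnd : ∀ (p : ℂ × ℂ × ℂ) (q : ℂ × ℂ), p ≠ 0 → q ≠ 0 →
      p.1 * q.1 + p.2.1 * q.2 = 0 →
      Function.Injective (cpbarA a₁ a₂ x c p q).mulVec ∧
      Function.Surjective (cpbarB a₁ a₂ x b p q).mulVec)
    (g h : Matrix (Fin k) (Fin k) ℂ) (hg : IsUnit g) (hh : IsUnit h)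
    (h1 : g * a₁ * h⁻¹ = a₁) (h2 : g * a₂ * h⁻¹ = a₂) (h3 : h * x * g⁻¹ = x)
    (h4 : g * b = b) (h5 : c * h⁻¹ = c) :
    g = 1 ∧ h = 1 := by
  have hg₁h₁ := cpbar_action_free_general (isIntegrable_ofMatrix hint)
    (fun p q hp hq hpq ↦ injective_monadA_ofMatrix (hnd p q hp hq hpq).1)
    (fun p q hp hq hpq ↦ surjective_monadB_ofMatrix (hnd p q hp hq hpq).2)
    ((toLin'_mul g a₁).symm.trans (toLin'_eq_comp_of_mul_inv_eq hh h1))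
    ((toLin'_mul g a₂).symm.trans (toLin'_eq_comp_of_mul_inv_eq hh h2))
    ((toLin'_mul h x).symm.trans (toLin'_eq_comp_of_mul_inv_eq hg h3))
    ((toLin'_mul g b).symm.trans (congrArg toLin' h4))
    (toLin'_eq_comp_of_mul_inv_eq hh h5).symm
  exact hg₁h₁.imp (toLin'.injective <| ·.trans toLin'_one.symm)
    (toLin'.injective <| ·.trans toLin'_one.symm)
end

section
/- Dual configurations on ℂP̄²: if (a₁, a₂, x, b, c) is an integrable (a₁xa₂ − a₂xa₁ + bc = 0) and nondegenerate ℂP̄²-configuration, then the dual tuple (a₁ᵀ, a₂ᵀ, xᵀ, −cᵀ, bᵀ) is again an integrable and nondegenerate ℂP̄²-configuration; it corresponds to the dual bundle ℰ*. -/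
open Matrix

/-!
Block row operations with coefficients `±1`, `x` and a unit `s` turn `A(p,q)` of `(a₁, a₂, x, c)`
into the transpose of `B(p,q)` of `(a₁ᵀ, a₂ᵀ, xᵀ, s cᵀ)`, so the former is injective exactly when
the latter is surjective. Taking `s = -1` at the given configuration and `s = 1` at its dual
exchanges the two halves of nondegeneracy. Integrability of the dual is minus the transpose of the
original integrability equation.
-/

section LinearAlgebra

variable {m n R : Type*} [Fintype m] [Fintype n]

theorem mulVec_injective_iff_mulVec_transpose_surjective [Field R] (M : Matrix m n R) :
    Function.Injective M.mulVec ↔ Function.Surjective Mᵀ.mulVec := by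
  calc Function.Injective M.mulVec
      ↔ Fintype.card n = M.rank := by
        rw [mulVec_injective_iff, linearIndependent_iff_card_eq_finrank_span,
          rank_eq_finrank_span_cols, Set.finrank]
    _ ↔ Mᵀ.rank = Module.finrank R (n → R) := by
        rw [rank_transpose, Module.finrank_fintype_fun_eq_card, eq_comm]
    _ ↔ Function.Surjective Mᵀ.mulVec := by
        rw [rank, ← coe_mulVecLin, ← LinearMap.range_eq_top]
        exact ⟨Submodule.eq_top_of_finrank_eq, fun h ↦ by rw [h, finrank_top]⟩

theorem mulVec_mul_injective_iff_of_isUnit [DecidableEq m] [Semiring R] {P : Matrix m m R}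
    (hP : IsUnit P) (M : Matrix m n R) :
    Function.Injective (P * M).mulVec ↔ Function.Injective M.mulVec := by
  have hcomp : (P * M).mulVec = P.mulVec ∘ M.mulVec := funext fun v ↦ (mulVec_mulVec v P M).symm
  rw [hcomp, (mulVec_injective_of_isUnit hP).of_comp_iff]

theorem isUnit_fromBlocks_zero₁₁_zero₂₂ [DecidableEq m] [Semiring R] {B C : Matrix m m R}
    (hB : IsUnit B) (hC : IsUnit C) : IsUnit (fromBlocks 0 B C 0) := by
  obtain ⟨B', hBB', hB'B⟩ := isUnit_iff_exists.1 hB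
  obtain ⟨C', hCC', hC'C⟩ := isUnit_iff_exists.1 hC
  refine isUnit_iff_exists.2 ⟨fromBlocks 0 C' B' 0, ?_, ?_⟩
  · simp [fromBlocks_multiply, hBB', hCC']
  · simp [fromBlocks_multiply, hB'B, hC'C]

theorem dual_integrability_eq_neg_transpose {l : Type*} [Fintype l] [NonUnitalCommRing R]
    (a₁ a₂ : Matrix m l R) (x : Matrix l m R) (b : Matrix m n R) (c : Matrix n l R) :
    a₁ᵀ * xᵀ * a₂ᵀ - a₂ᵀ * xᵀ * a₁ᵀ + (-cᵀ) * bᵀ = -(a₁ * x * a₂ - a₂ * x * a₁ + b * c)ᵀ := by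
  simp only [transpose_add, transpose_sub, transpose_mul, Matrix.neg_mul, Matrix.mul_assoc]
  abel

end LinearAlgebra

section MonadDuality

variable {ι R : Type*} [DecidableEq ι]

/-- The swap of two summands twisted by `x`, that is `(u, v) ↦ (x u + v, u)`. It is the row
operation relating the blocks of the two monad maps. -/
def twistedSwap [Zero R] [One R] (x : Matrix ι ι R) : Matrix (ι ⊕ ι) (ι ⊕ ι) R :=
  fromBlocks x 1 1 0

theorem isUnit_twistedSwap [Fintype ι] [Ring R] (x : Matrix ι ι R) : IsUnit (twistedSwap x) := by
  refine isUnit_iff_exists.2 ⟨fromBlocks 0 1 1 (-x), ?_, ?_⟩ <;>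
    simp [twistedSwap, fromBlocks_multiply]

theorem twistedSwap_mul_fromRows {κ : Type*} [Fintype ι] [Semiring R] (x : Matrix ι ι R)
    (u v : Matrix ι κ R) : twistedSwap x * fromRows u v = fromRows (x * u + v) u := by
  rw [twistedSwap, fromBlocks_mul_fromRows, Matrix.one_mul, Matrix.one_mul, Matrix.zero_mul,
    add_zero]

/-- The row operations on `A(p,q)` that produce the transpose of the map `B(p,q)` of the dual
configuration. The unit `s` is the sign with which `c` is dualized; both signs occur because
dualizing twice gives `(a₁, a₂, x, -b, -c)`. -/
def monadDuality [Ring R] (κ : Type*) [DecidableEq κ] (x : Matrix ι ι R) (s : Rˣ) :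
    Matrix (((ι ⊕ ι) ⊕ (ι ⊕ ι)) ⊕ κ) (((ι ⊕ ι) ⊕ (ι ⊕ ι)) ⊕ κ) R :=
  fromBlocks (fromBlocks 0 (twistedSwap x) (-twistedSwap x) 0) 0 0 (s • 1)

theorem isUnit_monadDuality [CommRing R] {κ : Type*} [Fintype ι] [Fintype κ]
    [DecidableEq κ] (x : Matrix ι ι R) (s : Rˣ) : IsUnit (monadDuality κ x s) := by
  have hx : IsUnit (twistedSwap x) := isUnit_twistedSwap x
  have hs : IsUnit (s • (1 : Matrix κ κ R)) := isUnit_one.smul s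
  exact isUnit_fromBlocks_zero₁₂.2 ⟨isUnit_fromBlocks_zero₁₁_zero₂₂ hx hx.neg, hs⟩

end MonadDuality

section Configuration

variable {k n : ℕ} (a₁ a₂ x : Matrix (Fin k) (Fin k) ℂ) (c : Matrix (Fin n) (Fin k) ℂ)
  (s : ℂˣ) (p : ℂ × ℂ × ℂ) (q : ℂ × ℂ)

theorem monadDuality_mul_cpbarA :
    monadDuality (Fin n) x s * cpbarA a₁ a₂ x c p q = (cpbarB a₁ᵀ a₂ᵀ xᵀ (s • cᵀ) p q)ᵀ := by
  have cancel (a : Matrix (Fin k) (Fin k) ℂ) (r t : ℂ) :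
      x * t • a + (r • 1 - t • (x * a)) = r • 1 := by
    rw [Matrix.mul_smul, add_sub_cancel]
  rw [monadDuality, cpbarA, cpbarB, mul_fromCols]
  simp only [fromBlocks_mul_fromRows, Matrix.neg_mul, twistedSwap_mul_fromRows, cancel,
    transpose_fromRows, transpose_fromCols]
  simp

theorem cpbarA_injective_iff_cpbarB_transpose_surjective :
    Function.Injective (cpbarA a₁ a₂ x c p q).mulVec ↔
      Function.Surjective (cpbarB a₁ᵀ a₂ᵀ xᵀ (s • cᵀ) p q).mulVec := by
  rw [← mulVec_mul_injective_iff_of_isUnit (isUnit_monadDuality x s), monadDuality_mul_cpbarA,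
    mulVec_injective_iff_mulVec_transpose_surjective, transpose_transpose]

end Configuration

/-- Dual configurations on `ℂP̄²`: if `(a₁, a₂, x, b, c)` is an integrable nondegenerate
`ℂP̄²`-configuration, then so is the dual tuple `(a₁ᵀ, a₂ᵀ, xᵀ, −cᵀ, bᵀ)`. -/
theorem cpbar_dual_configuration {k n : ℕ}
    (a₁ a₂ x : Matrix (Fin k) (Fin k) ℂ)
    (b : Matrix (Fin k) (Fin n) ℂ) (c : Matrix (Fin n) (Fin k) ℂ)
    (hint : a₁ * x * a₂ - a₂ * x * a₁ + b * c = 0)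
    (hnd : ∀ (p : ℂ × ℂ × ℂ) (q : ℂ × ℂ), p ≠ 0 → q ≠ 0 →
      p.1 * q.1 + p.2.1 * q.2 = 0 →
      Function.Injective (cpbarA a₁ a₂ x c p q).mulVec ∧
      Function.Surjective (cpbarB a₁ a₂ x b p q).mulVec) :
    (a₁ᵀ * xᵀ * a₂ᵀ - a₂ᵀ * xᵀ * a₁ᵀ + (-cᵀ) * bᵀ = 0) ∧
    (∀ (p : ℂ × ℂ × ℂ) (q : ℂ × ℂ), p ≠ 0 → q ≠ 0 →
      p.1 * q.1 + p.2.1 * q.2 = 0 →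
      Function.Injective (cpbarA a₁ᵀ a₂ᵀ xᵀ bᵀ p q).mulVec ∧
      Function.Surjective (cpbarB a₁ᵀ a₂ᵀ xᵀ (-cᵀ) p q).mulVec) := by
  refine ⟨?_, fun p q hp hq hpq ↦ ?_⟩
  · rw [dual_integrability_eq_neg_transpose, hint, transpose_zero, neg_zero]
  · obtain ⟨hA, hB⟩ := hnd p q hp hq hpq
    constructor
    · rw [cpbarA_injective_iff_cpbarB_transpose_surjective a₁ᵀ a₂ᵀ xᵀ bᵀ 1]
      simpa only [transpose_transpose, one_smul] using hB
    · rw [cpbarA_injective_iff_cpbarB_transpose_surjective a₁ a₂ x c (-1)] at hA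
      simpa only [Units.neg_smul, one_smul] using hA
end
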